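/- Fix ν > 0, and let γ₂(λ) = μ₄(λ)/(μ₂(λ))² − 3 denote the excess kurtosis of the CMP(λ,ν) distribution, where μ_k(λ) = E[(X − E X)^k] is the k-th central moment of X ∼ CMP(λ,ν). Then as λ → ∞, γ₂(λ) = (λ^(−1/ν)/ν)·(1 − ((ν²−1)/(24ν²))·λ^(−2/ν) + ((ν²−1)/(6ν³))·λ^(−3/ν) + O(λ^(−4/ν))). Precisely: there exist constants C > 0 and Λ > 0 (depending only on ν) such that for all λ ≥ Λ, |ν·λ^(1/ν)·γ₂(λ) − 1 + ((ν²−1)/(24ν²))·λ^(−2/ν) − ((ν²−1)/(6ν³))·λ^(−3/ν)| ≤ C·λ^(−4/ν). -/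

import Mathlib

open scoped BigOperators

/-- The Conway-Maxwell-Poisson normalizing constant `Z(λ,ν) = ∑_{i=0}^∞ λ^i/(i!)^ν`. -/
noncomputable def cmpZ (lam nu : ℝ) : ℝ := ∑' i : ℕ, lam ^ i / (i.factorial : ℝ) ^ nu

/-- The mean of the `CMP(λ,ν)` distribution. -/
noncomputable def cmpMean (lam nu : ℝ) : ℝ :=
  (∑' j : ℕ, (j : ℝ) * lam ^ j / (j.factorial : ℝ) ^ nu) / cmpZ lam nu

/-- The `k`-th central moment `μ_k = E[(X − E X)^k]` of the `CMP(λ,ν)` distribution. -/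
noncomputable def cmpCentralMoment (k : ℕ) (lam nu : ℝ) : ℝ :=
  (∑' j : ℕ, ((j : ℝ) - cmpMean lam nu) ^ k * lam ^ j / (j.factorial : ℝ) ^ nu) / cmpZ lam nu

/-- The excess kurtosis `γ₂ = μ₄/μ₂² − 3` of the `CMP(λ,ν)` distribution. -/
noncomputable def cmpExcessKurtosis (lam nu : ℝ) : ℝ :=
  cmpCentralMoment 4 lam nu / cmpCentralMoment 2 lam nu ^ 2 - 3

/-! Put `ε = λ ^ (-1/ν)` and `D = εX - 1`, where `X` follows `CMP(λ, ν)`. The weights give the Stein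
identity `E[X ^ ν f(X)] = λ E[f(X + 1)]`, that is, `E[(1 + D) ^ ν f] = E[f(· + 1)]`, where the shift
moves `D` by `ε`. With `f = (2 + D) * D ^ (2 * m + 1)` it shows that `E[D ^ (2 * m)] = O(ε ^ m)`.
With `f = D ^ k` and the Taylor expansion of `(1 + D) ^ ν`, it becomes a recursion which yields an
asymptotic expansion of every `E[D ^ k]` in powers of `ε`.

The `CMP` laws form an exponential family in `s = log λ = -ν log ε`, so each cumulant is the
derivative of the previous one in `s`, and `d/ds` multiplies `ε ^ p` by `-p / ν`. The cumulants
therefore inherit their expansions from that of the mean. Differentiating an expansion is legitimate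
as soon as the derivative is known to have some expansion, which holds here because cumulants are
polynomials in the moments. The excess kurtosis is the fourth cumulant over the square of the
second, so its expansion up to a relative error `O(ε ^ 4)` needs only `E[D]` up to `O(ε ^ 4)`.
-/

open Filter Topology Asymptotics MeasureTheory ProbabilityTheory
open scoped PowerSeries Polynomial

section FormalSeries

variable {R : Type*} {N : ℕ}

lemma X_pow_dvd_sub_trunc [CommRing R] (N : ℕ) (F : R⟦X⟧) :
    PowerSeries.X ^ N ∣ F - (F.trunc N : R⟦X⟧) := by
  rw [PowerSeries.X_pow_dvd_iff]
  intro m hm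
  simp [PowerSeries.coeff_trunc, hm]

lemma X_pow_dvd_coe_iff [CommSemiring R] {P : R[X]} :
    (PowerSeries.X : R⟦X⟧) ^ N ∣ P ↔ Polynomial.X ^ N ∣ P := by
  simp [PowerSeries.X_pow_dvd_iff, Polynomial.X_pow_dvd_iff]

lemma X_pow_dvd_mul_inv_sub {K : Type*} [Field K] {F G H : K⟦X⟧}
    (h0 : PowerSeries.constantCoeff G ≠ 0) (h : PowerSeries.X ^ N ∣ F - H * G) :
    PowerSeries.X ^ N ∣ F * G⁻¹ - H := by
  convert h.mul_right G⁻¹ using 1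
  rw [sub_mul, mul_assoc H, PowerSeries.mul_inv_cancel _ h0, mul_one]

lemma coeff_two_mul [Semiring R] (F G : R⟦X⟧) : (F * G).coeff 2 =
    F.coeff 0 * G.coeff 2 + F.coeff 1 * G.coeff 1 + F.coeff 2 * G.coeff 0 := by
  simp [PowerSeries.coeff_mul, Finset.Nat.antidiagonal_succ, add_assoc]

lemma coeff_three_mul [Semiring R] (F G : R⟦X⟧) : (F * G).coeff 3 =
    F.coeff 0 * G.coeff 3 + F.coeff 1 * G.coeff 2 + F.coeff 2 * G.coeff 1 +
      F.coeff 3 * G.coeff 0 := by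
  simp [PowerSeries.coeff_mul, Finset.Nat.antidiagonal_succ, add_assoc]

end FormalSeries

section Expansion

lemma isBigO_eval_nhdsGT_zero (P : ℝ[X]) : (fun x => P.eval x) =O[𝓝[>] 0] fun _ => (1 : ℝ) :=
  ((P.continuous.tendsto 0).mono_left nhdsWithin_le_nhds).isBigO_one ℝ

lemma isBigO_eval_of_X_pow_dvd {N : ℕ} {P : ℝ[X]} (h : Polynomial.X ^ N ∣ P) :
    (fun x => P.eval x) =O[𝓝[>] 0] fun x => x ^ N := by
  obtain ⟨Q, rfl⟩ := h
  simpa using (isBigO_refl (fun x : ℝ => x ^ N) (𝓝[>] 0)).mul (isBigO_eval_nhdsGT_zero Q)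

lemma isBigO_pow_pow_nhdsGT_zero {m n : ℕ} (h : m ≤ n) :
    (fun x : ℝ => x ^ n) =O[𝓝[>] 0] fun x => x ^ m := by
  simpa using isBigO_eval_of_X_pow_dvd (pow_dvd_pow Polynomial.X h)

lemma X_pow_dvd_of_frequently_abs_eval_le {P : ℝ[X]} {n : ℕ} {C : ℝ}
    (h : ∃ᶠ x in 𝓝[>] (0 : ℝ), |P.eval x| ≤ C * x ^ n) : Polynomial.X ^ n ∣ P := by
  induction n generalizing P with
  | zero => simp
  | succ n ih =>
    have hlim (Q : ℝ[X]) : Tendsto (fun x => Q.eval x) (𝓝[>] 0) (𝓝 (Q.eval 0)) :=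
      (Q.continuous.tendsto 0).mono_left nhdsWithin_le_nhds
    have hzero : |P.eval 0| ≤ (Polynomial.C C * Polynomial.X ^ (n + 1)).eval 0 :=
      le_of_tendsto_of_tendsto_of_frequently (hlim P).abs (hlim _) (by simpa using h)
    obtain ⟨Q, rfl⟩ : Polynomial.X ∣ P := by
      rw [Polynomial.X_dvd_iff, Polynomial.coeff_zero_eq_eval_zero]
      simpa using hzero
    rw [pow_succ']
    refine mul_dvd_mul_left _ (ih ((h.and_eventually self_mem_nhdsWithin).mono ?_))
    rintro x ⟨hx, hpos : 0 < x⟩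
    rw [Polynomial.eval_mul, Polynomial.eval_X, abs_mul, abs_of_pos hpos] at hx
    refine le_of_mul_le_mul_left (hx.trans_eq ?_) hpos
    ring

/-- Agreement of `f x`, as `x → 0⁺`, with the truncation of the formal power series `F` below
degree `N`, up to an error `O(x ^ N)`. -/
def HasExpansionUpTo (N : ℕ) (f : ℝ → ℝ) (F : ℝ⟦X⟧) : Prop :=
  (fun x => f x - (F.trunc N).eval x) =O[𝓝[>] 0] fun x => x ^ N

/-- `F` is the (not necessarily convergent) asymptotic expansion of `f x` as `x → 0⁺`. -/
def HasExpansion (f : ℝ → ℝ) (F : ℝ⟦X⟧) : Prop :=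
  ∀ N, HasExpansionUpTo N f F

variable {f g : ℝ → ℝ} {F G : ℝ⟦X⟧} {N : ℕ}

lemma hasExpansionUpTo_iff {P : ℝ[X]} (h : PowerSeries.X ^ N ∣ F - (P : ℝ⟦X⟧)) :
    HasExpansionUpTo N f F ↔ (fun x => f x - P.eval x) =O[𝓝[>] 0] fun x => x ^ N := by
  have hdvd : Polynomial.X ^ N ∣ P - F.trunc N := by
    rw [← X_pow_dvd_coe_iff, Polynomial.coe_sub]
    simpa using dvd_sub (X_pow_dvd_sub_trunc N F) h
  have hO := isBigO_eval_of_X_pow_dvd hdvd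
  simp only [Polynomial.eval_sub] at hO
  constructor <;> intro hf
  · exact (hf.sub hO).congr_left fun x => by ring
  · exact (hf.add hO).congr_left fun x => by ring

namespace HasExpansionUpTo

lemma of_X_pow_dvd_sub (hf : HasExpansionUpTo N f F) (h : PowerSeries.X ^ N ∣ F - G) :
    HasExpansionUpTo N f G := by
  refine (hasExpansionUpTo_iff ?_).2 hf
  simpa using dvd_sub (X_pow_dvd_sub_trunc N F) h

lemma congr_isBigO (hg : HasExpansionUpTo N g F)
    (h : (fun x => f x - g x) =O[𝓝[>] 0] fun x => x ^ N) : HasExpansionUpTo N f F :=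
  (h.add hg).congr_left fun x => by ring

lemma isBigO_one (hf : HasExpansionUpTo N f F) : f =O[𝓝[>] 0] fun _ => (1 : ℝ) := by
  have hpow : (fun x : ℝ => x ^ N) =O[𝓝[>] 0] fun _ => (1 : ℝ) := by
    simpa using isBigO_pow_pow_nhdsGT_zero N.zero_le
  exact ((hf.trans hpow).add (isBigO_eval_nhdsGT_zero (F.trunc N))).congr_left fun x => by ring

lemma mono {M : ℕ} (hf : HasExpansionUpTo N f F) (h : M ≤ N) : HasExpansionUpTo M f F :=
  (hasExpansionUpTo_iff ((pow_dvd_pow _ h).trans (X_pow_dvd_sub_trunc N F))).2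
    (hf.trans (isBigO_pow_pow_nhdsGT_zero h))

lemma zero : HasExpansionUpTo N (fun _ => 0) 0 := by
  simpa [HasExpansionUpTo] using isBigO_zero _ _

lemma one : HasExpansionUpTo N (fun _ => 1) 1 :=
  (hasExpansionUpTo_iff (P := 1) (by simp)).2 (by simpa using isBigO_zero _ _)

lemma id : HasExpansionUpTo N (fun x => x) PowerSeries.X :=
  (hasExpansionUpTo_iff (P := Polynomial.X) (by simp)).2 (by simpa using isBigO_zero _ _)

lemma add (hf : HasExpansionUpTo N f F) (hg : HasExpansionUpTo N g G) :
    HasExpansionUpTo N (fun x => f x + g x) (F + G) := by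
  refine (IsBigO.add hf hg).congr_left fun x => ?_
  rw [map_add, Polynomial.eval_add]
  ring

lemma mul (hf : HasExpansionUpTo N f F) (hg : HasExpansionUpTo N g G) :
    HasExpansionUpTo N (fun x => f x * g x) (F * G) := by
  have hdvd : PowerSeries.X ^ N ∣ F * G - ((F.trunc N * G.trunc N : ℝ[X]) : ℝ⟦X⟧) := by
    convert dvd_add ((X_pow_dvd_sub_trunc N F).mul_right G)
      ((X_pow_dvd_sub_trunc N G).mul_left (F.trunc N : ℝ⟦X⟧)) using 1
    rw [Polynomial.coe_mul]
    ring
  rw [hasExpansionUpTo_iff hdvd]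
  have h := ((IsBigO.mul hf hg.isBigO_one).congr_right fun x => mul_one _).add
    ((IsBigO.mul (isBigO_eval_nhdsGT_zero (F.trunc N)) hg).congr_right fun x => one_mul _)
  refine h.congr_left fun x => ?_
  rw [Polynomial.eval_mul]
  ring

lemma const_mul (c : ℝ) (hf : HasExpansionUpTo N f F) :
    HasExpansionUpTo N (fun x => c * f x) (c • F) := by
  refine (IsBigO.const_mul_left hf c).congr_left fun x => ?_
  rw [map_smul, Polynomial.eval_smul, smul_eq_mul]
  ring

lemma sub (hf : HasExpansionUpTo N f F) (hg : HasExpansionUpTo N g G) :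
    HasExpansionUpTo N (fun x => f x - g x) (F - G) := by
  simpa [sub_eq_add_neg] using hf.add (hg.const_mul (-1))

lemma sum {ι : Type*} {s : Finset ι} {f : ι → ℝ → ℝ} {F : ι → ℝ⟦X⟧}
    (h : ∀ i ∈ s, HasExpansionUpTo N (f i) (F i)) :
    HasExpansionUpTo N (fun x => ∑ i ∈ s, f i x) (∑ i ∈ s, F i) := by
  classical
  induction s using Finset.induction_on with
  | empty => simpa using zero
  | insert i s hi ih =>
    simp only [Finset.sum_insert hi]
    exact (h i (by simp)).add (ih fun j hj => h j (by simp [hj]))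

end HasExpansionUpTo

lemma hasExpansionUpTo_pow_mul_iff {r : ℕ} :
    HasExpansionUpTo (r + N) (fun x => x ^ r * f x) (PowerSeries.X ^ r * F) ↔
      HasExpansionUpTo N f F := by
  have hdvd : PowerSeries.X ^ (r + N) ∣
      PowerSeries.X ^ r * F - ((Polynomial.X ^ r * F.trunc N : ℝ[X]) : ℝ⟦X⟧) := by
    rw [Polynomial.coe_mul, Polynomial.coe_pow, Polynomial.coe_X, ← mul_sub, pow_add]
    exact mul_dvd_mul_left _ (X_pow_dvd_sub_trunc N F)
  rw [hasExpansionUpTo_iff hdvd, HasExpansionUpTo, isBigO_iff, isBigO_iff]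
  refine exists_congr fun c => eventually_congr ?_
  filter_upwards [self_mem_nhdsWithin] with x (hx : 0 < x)
  rw [Polynomial.eval_mul, Polynomial.eval_pow, Polynomial.eval_X, ← mul_sub, norm_mul, pow_add,
    norm_mul, mul_left_comm c, mul_le_mul_iff_right₀ (norm_pos_iff.2 (pow_ne_zero _ hx.ne'))]

lemma HasExpansion.tendsto (hf : HasExpansion f F) :
    Tendsto f (𝓝[>] 0) (𝓝 (PowerSeries.constantCoeff F)) := by
  have h : (fun x => f x - PowerSeries.constantCoeff F) =O[𝓝[>] 0] fun x : ℝ => x := by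
    simpa [HasExpansionUpTo, PowerSeries.trunc_one_left] using hf 1
  have hid : Tendsto (fun x : ℝ => x) (𝓝[>] 0) (𝓝 0) := tendsto_id.mono_left nhdsWithin_le_nhds
  simpa using (h.trans_tendsto hid).add_const (PowerSeries.constantCoeff F)

lemma HasExpansion.div (hf : HasExpansion f F) (hg : HasExpansion g G)
    (h0 : PowerSeries.constantCoeff G ≠ 0) :
    HasExpansion (fun x => f x / g x) (F * G⁻¹) := by
  intro N
  let Q := (F * G⁻¹).trunc N
  have hnum : (fun x => f x - Q.eval x * g x) =O[𝓝[>] 0] fun x => x ^ N := by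
    have hQexp : HasExpansionUpTo N (fun x => Q.eval x) (F * G⁻¹) := by
      simpa [HasExpansionUpTo, Q] using isBigO_zero _ _
    have h := (hf N).sub (hQexp.mul (hg N))
    rw [mul_assoc, PowerSeries.inv_mul_cancel G h0, mul_one, sub_self] at h
    simpa [HasExpansionUpTo] using h
  have hinv : (fun x => (g x)⁻¹) =O[𝓝[>] 0] fun _ => (1 : ℝ) := (hg.tendsto.inv₀ h0).isBigO_one ℝ
  refine (hnum.mul hinv).congr' ?_ (by simp)
  filter_upwards [hg.tendsto.eventually_ne h0] with x hx
  rw [← div_eq_mul_inv, sub_div, mul_div_cancel_right₀ _ hx]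

lemma exists_frequently_abs_deriv_le {g' : ℝ → ℝ}
    (hg : g =O[𝓝[>] 0] fun x => x ^ (N + 1))
    (hd : ∀ᶠ x in 𝓝[>] (0 : ℝ), HasDerivAt g (g' x) x) :
    ∃ C, ∃ᶠ x in 𝓝[>] (0 : ℝ), |g' x| ≤ C * x ^ N := by
  obtain ⟨C, hC, hb⟩ := hg.exists_pos
  obtain ⟨δ, hδ, hprop⟩ := mem_nhdsGT_iff_exists_Ioo_subset.1 (hb.bound.and hd)
  refine ⟨C * (2 ^ (N + 1) + 1), frequently_iff.2 fun {U} hU => ?_⟩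
  obtain ⟨η, hη, hηU⟩ := mem_nhdsGT_iff_exists_Ioo_subset.1 hU
  obtain ⟨x, hx0, hx⟩ : ∃ x > 0, 2 * x < min δ η :=
    ⟨min δ η / 3, by simp_all, by linarith [lt_min (Set.mem_Ioi.1 hδ) (Set.mem_Ioi.1 hη)]⟩
  have hsub : Set.Icc x (2 * x) ⊆ Set.Ioo 0 δ := fun y hy =>
    ⟨hx0.trans_le hy.1, hy.2.trans_lt (hx.trans_le (min_le_left _ _))⟩
  have hbound : ∀ y ∈ Set.Icc x (2 * x), |g y| ≤ C * y ^ (N + 1) := fun y hy => by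
    simpa [abs_of_pos (hsub hy).1] using (hprop (hsub hy)).1
  have hderiv : ∀ y ∈ Set.Icc x (2 * x), HasDerivAt g (g' y) y := fun y hy => (hprop (hsub hy)).2
  obtain ⟨ξ, hξ, hslope⟩ := exists_hasDerivAt_eq_slope g g' (by linarith : x < 2 * x)
    (fun y hy => (hderiv y hy).continuousAt.continuousWithinAt)
    fun y hy => hderiv y (Set.Ioo_subset_Icc_self hy)
  have hxy : x ≤ 2 * x := by linarith
  refine ⟨ξ, hηU ⟨hx0.trans hξ.1, hξ.2.trans (hx.trans_le (min_le_right _ _))⟩, ?_⟩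
  calc |g' ξ| = |g (2 * x) - g x| / x := by
        rw [hslope, abs_div, two_mul, add_sub_cancel_right, abs_of_pos hx0]
    _ ≤ (C * (2 * x) ^ (N + 1) + C * x ^ (N + 1)) / x := by
        gcongr
        exact (abs_sub _ _).trans
          (add_le_add (hbound _ (Set.right_mem_Icc.2 hxy)) (hbound _ (Set.left_mem_Icc.2 hxy)))
    _ = C * (2 ^ (N + 1) + 1) * x ^ N := by
        field_simp
        ring
    _ ≤ C * (2 ^ (N + 1) + 1) * ξ ^ N := by gcongr; exact hξ.1.le

lemma HasExpansion.X_pow_mul_derivative_eq {f' : ℝ → ℝ} {a : ℕ} (hf : HasExpansion f F)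
    (hd : ∀ᶠ x in 𝓝[>] (0 : ℝ), HasDerivAt f (f' x) x)
    (hG : HasExpansion (fun x => x ^ a * f' x) G) :
    PowerSeries.X ^ a * PowerSeries.derivative ℝ F = G := by
  suffices h : ∀ N, PowerSeries.X ^ N ∣ PowerSeries.X ^ a * PowerSeries.derivative ℝ F - G by
    ext n
    simpa [sub_eq_zero] using PowerSeries.X_pow_dvd_iff.1 (h (n + 1)) n n.lt_succ_self
  intro N
  let P := F.trunc (N + 1)
  let Q := G.trunc N
  have hF' : PowerSeries.X ^ N ∣
      PowerSeries.derivative ℝ F - (Polynomial.derivative P : ℝ⟦X⟧) := by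
    rw [PowerSeries.X_pow_dvd_iff]
    intro m hm
    simp [P, PowerSeries.coeff_derivative, Polynomial.coeff_derivative, PowerSeries.coeff_trunc, hm]
  have hPQ : Polynomial.X ^ N ∣ Polynomial.X ^ a * Polynomial.derivative P - Q := by
    obtain ⟨C₁, hC₁⟩ := exists_frequently_abs_deriv_le (hf (N + 1))
      (hd.mono fun x hx => hx.sub (P.hasDerivAt x))
    obtain ⟨C₂, hC₂⟩ := (hG N).bound
    refine X_pow_dvd_of_frequently_abs_eval_le (C := C₁ + C₂) ((hC₁.and_eventually
      (hC₂.and (Ioo_mem_nhdsGT zero_lt_one))).mono ?_)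
    rintro x ⟨h₁, h₂, hx0, hx1⟩
    rw [Real.norm_eq_abs, Real.norm_of_nonneg (by positivity)] at h₂
    have hxa : |x ^ a * (f' x - (Polynomial.derivative P).eval x)| ≤ C₁ * x ^ N := by
      rw [abs_mul, abs_of_nonneg (by positivity)]
      exact (mul_le_of_le_one_left (abs_nonneg _) (pow_le_one₀ hx0.le hx1.le)).trans h₁
    simp only [Polynomial.eval_sub, Polynomial.eval_mul, Polynomial.eval_pow, Polynomial.eval_X]
    calc |x ^ a * (Polynomial.derivative P).eval x - Q.eval x|
        = |(x ^ a * f' x - Q.eval x) - x ^ a * (f' x - (Polynomial.derivative P).eval x)| := by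
          congr 1; ring
      _ ≤ C₂ * x ^ N + C₁ * x ^ N := (abs_sub _ _).trans (add_le_add h₂ hxa)
      _ = (C₁ + C₂) * x ^ N := by ring
  have hG' := X_pow_dvd_sub_trunc N G
  convert dvd_sub (dvd_add (hF'.mul_left (PowerSeries.X ^ a)) (X_pow_dvd_coe_iff.2 hPQ)) hG' using 1
  simp only [P, Q, Polynomial.coe_sub, Polynomial.coe_mul, Polynomial.coe_pow, Polynomial.coe_X]
  ring

theorem HasExpansion.derivative {f' : ℝ → ℝ} {a : ℕ} (hf : HasExpansion f F)
    (hd : ∀ᶠ x in 𝓝[>] (0 : ℝ), HasDerivAt f (f' x) x)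
    (hG : HasExpansion (fun x => x ^ a * f' x) G) :
    HasExpansion f' (PowerSeries.derivative ℝ F) := fun N =>
  hasExpansionUpTo_pow_mul_iff.1 (hf.X_pow_mul_derivative_eq hd hG ▸ hG (a + N))

/-- The real functions having an asymptotic expansion at `0⁺`. -/
def expandable : Subalgebra ℝ (ℝ → ℝ) where
  carrier := {f | ∃ F, HasExpansion f F}
  mul_mem' := by
    rintro f g ⟨F, hF⟩ ⟨G, hG⟩
    exact ⟨F * G, fun N => (hF N).mul (hG N)⟩
  add_mem' := by
    rintro f g ⟨F, hF⟩ ⟨G, hG⟩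
    exact ⟨F + G, fun N => (hF N).add (hG N)⟩
  algebraMap_mem' c := ⟨c • 1, fun N => by
    simpa [Pi.algebraMap_def] using HasExpansionUpTo.one.const_mul c⟩

end Expansion

section Inequalities

variable {ν ε : ℝ}

lemma min_one_mul_sq_le_rpow_sub_one_mul (hν : 0 < ν) {x : ℝ} (hx : 0 ≤ x) :
    min 1 ν * (x - 1) ^ 2 ≤ (x ^ ν - 1) * ((1 + x) * (x - 1)) := by
  have hc : 0 < min 1 ν := lt_min one_pos hν
  rcases le_total x 1 with h1 | h1
  · have hpow : x ^ ν ≤ 1 + min 1 ν * (x - 1) := calc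
      x ^ ν ≤ (1 + (x - 1)) ^ min 1 ν := by
        rw [add_sub_cancel]
        exact Real.rpow_le_rpow_of_exponent_ge' hx h1 hc.le (min_le_right _ _)
      _ ≤ 1 + min 1 ν * (x - 1) :=
        rpow_one_add_le_one_add_mul_self (by linarith) hc.le (min_le_left _ _)
    have h2 : (1 + x) * (x - 1) ≤ x - 1 := by nlinarith
    nlinarith [mul_nonneg (sub_nonneg.2 h2) (by nlinarith : (0 : ℝ) ≤ 1 - x ^ ν),
      mul_nonneg (sub_nonneg.2 hpow) (sub_nonneg.2 h1)]
  · have hx0 : 0 < x := by linarith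
    have hpow : ν * (1 - x⁻¹) ≤ x ^ ν - 1 := by
      rw [Real.rpow_def_of_pos hx0]
      have := Real.add_one_le_exp (Real.log x * ν)
      have := mul_le_mul_of_nonneg_left (Real.one_sub_inv_le_log_of_pos hx0) hν.le
      linarith
    calc min 1 ν * (x - 1) ^ 2 ≤ ν * (x - 1) ^ 2 := by gcongr; exact min_le_right _ _
      _ ≤ ν * (x - 1) ^ 2 * (1 + x⁻¹) := le_mul_of_one_le_right (by positivity) (by simp [hx])
      _ = ν * (1 - x⁻¹) * ((1 + x) * (x - 1)) := by field_simp; ring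
      _ ≤ (x ^ ν - 1) * ((1 + x) * (x - 1)) := by
        gcongr

lemma pow_le_pow_add_pow {x : ℝ} (hx : 0 ≤ x) {a b c : ℕ} (hab : a ≤ b) (hbc : b ≤ c) :
    x ^ b ≤ x ^ a + x ^ c := by
  rcases le_total x 1 with h | h
  · exact (pow_le_pow_of_le_one hx h hab).trans (le_add_of_nonneg_right (by positivity))
  · exact (pow_le_pow_right₀ h hbc).trans (le_add_of_nonneg_left (by positivity))

lemma shift_sub_le_abs_add_pow (m : ℕ) (d : ℝ) (hε : 0 < ε) :
    (2 + (d + ε)) * (d + ε) ^ (2 * m + 1) - (2 + d) * d ^ (2 * m + 1) ≤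
      6 * (m + 1) * (ε * ((|d| + ε) ^ (2 * m) + (|d| + ε) ^ (2 * m + 2))) := by
  set u := |d| + ε
  have hd : |d| ≤ u := le_add_of_nonneg_right hε.le
  have hdε : |d + ε| ≤ u := (abs_add_le _ _).trans_eq (by rw [abs_of_pos hε])
  have hu0 : 0 ≤ u := (abs_nonneg d).trans hd
  have hodd : u ^ (2 * m + 1) ≤ u ^ (2 * m) + u ^ (2 * m + 2) :=
    pow_le_pow_add_pow hu0 (by omega) (by omega)
  have hdiff : |(d + ε) ^ (2 * m + 1) - d ^ (2 * m + 1)| ≤ ε * (2 * m + 1) * u ^ (2 * m) := by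
    refine (abs_pow_sub_pow_le _ _ _).trans ?_
    rw [add_sub_cancel_left, abs_of_pos hε, Nat.add_sub_cancel]
    push_cast
    gcongr
    exact max_le hdε hd
  have hsecond : (2 + d) * ((d + ε) ^ (2 * m + 1) - d ^ (2 * m + 1)) ≤
      (2 + u) * (ε * (2 * m + 1) * u ^ (2 * m)) := by
    refine (le_abs_self _).trans ?_
    rw [abs_mul]
    gcongr
    exact (abs_add_le _ _).trans (by simpa using hd)
  have hfirst : ε * (d + ε) ^ (2 * m + 1) ≤ ε * u ^ (2 * m + 1) :=
    mul_le_mul_of_nonneg_left ((le_abs_self _).trans (by rw [abs_pow]; gcongr)) hε.le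
  calc _ = ε * (d + ε) ^ (2 * m + 1) + (2 + d) * ((d + ε) ^ (2 * m + 1) - d ^ (2 * m + 1)) := by
        ring
    _ ≤ ε * u ^ (2 * m + 1) + (2 + u) * (ε * (2 * m + 1) * u ^ (2 * m)) := add_le_add hfirst hsecond
    _ = ε * ((2 * m + 2) * u ^ (2 * m + 1) + 2 * (2 * m + 1) * u ^ (2 * m)) := by ring
    _ ≤ ε * ((2 * m + 2) * (u ^ (2 * m) + u ^ (2 * m + 2)) +
          2 * (2 * m + 2) * (u ^ (2 * m) + u ^ (2 * m + 2))) := by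
        gcongr <;> linarith [pow_nonneg hu0 (2 * m + 2)]
    _ = 6 * (m + 1) * (ε * (u ^ (2 * m) + u ^ (2 * m + 2))) := by ring

lemma exists_shift_sub_le (m : ℕ) : ∃ C > 0, ∀ d ε : ℝ, 0 < ε → ε ≤ 1 →
    (2 + (d + ε)) * (d + ε) ^ (2 * m + 1) - (2 + d) * d ^ (2 * m + 1) ≤
      C * (ε * (d ^ (2 * m) + d ^ (2 * m + 2) + ε ^ m)) := by
  refine ⟨6 * (m + 1) * (2 * 2 ^ (2 * m + 2)), by positivity, fun d ε hε hε1 => ?_⟩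
  have heven {k : ℕ} (hk : Even k) (hk' : k ≤ 2 * m + 2) (hm : m ≤ k) :
      (|d| + ε) ^ k ≤ 2 ^ (2 * m + 2) * (d ^ k + ε ^ m) := calc
    (|d| + ε) ^ k ≤ 2 ^ (k - 1) * (|d| ^ k + ε ^ k) := add_pow_le (abs_nonneg d) hε.le k
    _ ≤ 2 ^ (2 * m + 2) * (d ^ k + ε ^ m) := by
      have hεk := pow_le_pow_of_le_one hε.le hε1 hm
      rw [hk.pow_abs]
      have := hk.pow_nonneg d
      gcongr
      · norm_num
      · omega
  have hd : 0 ≤ d ^ (2 * m) + d ^ (2 * m + 2) :=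
    add_nonneg ((even_two_mul m).pow_nonneg d) (((even_two_mul m).add even_two).pow_nonneg d)
  refine (shift_sub_le_abs_add_pow m d hε).trans ?_
  rw [mul_assoc (6 * ((m : ℝ) + 1))]
  refine mul_le_mul_of_nonneg_left ?_ (by positivity)
  calc ε * ((|d| + ε) ^ (2 * m) + (|d| + ε) ^ (2 * m + 2))
      ≤ ε * (2 ^ (2 * m + 2) * (d ^ (2 * m) + ε ^ m) +
          2 ^ (2 * m + 2) * (d ^ (2 * m + 2) + ε ^ m)) := by
        gcongr
        · exact heven (even_two_mul m) (by omega) (by omega)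
        · exact heven ((even_two_mul m).add even_two) le_rfl (by omega)
    _ = 2 ^ (2 * m + 2) * (ε * (d ^ (2 * m) + d ^ (2 * m + 2) + 2 * ε ^ m)) := by ring
    _ ≤ 2 ^ (2 * m + 2) * (ε * (2 * (d ^ (2 * m) + d ^ (2 * m + 2)) + 2 * ε ^ m)) := by
        gcongr
        linarith
    _ = 2 * 2 ^ (2 * m + 2) * (ε * (d ^ (2 * m) + d ^ (2 * m + 2) + ε ^ m)) := by ring

lemma rpow_one_add_sub_sum_choose_isBigO (ν : ℝ) (n : ℕ) :
    (fun y : ℝ => (1 + y) ^ ν - ∑ i ∈ Finset.range n, Ring.choose ν i * y ^ i) =O[𝓝 0]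
      fun y => |y| ^ n := by
  have h := (Real.one_add_rpow_hasFPowerSeriesAt_zero (a := ν)).isBigO_sub_partialSum_pow n
  simpa [FormalMultilinearSeries.partialSum, binomialSeries, mul_comm] using h

lemma abs_rpow_one_add_sub_sum_choose_le (hν : 0 ≤ ν) (n : ℕ) {y : ℝ} (hy : -1 ≤ y) :
    |(1 + y) ^ ν - ∑ i ∈ Finset.range n, Ring.choose ν i * y ^ i| ≤
      (1 + ∑ i ∈ Finset.range n, |Ring.choose ν i|) * (1 + |y|) ^ (n + ⌈ν⌉₊) := by
  have h1 : 1 ≤ 1 + |y| := by simp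
  have hy' : 0 ≤ 1 + y := by linarith
  have hrpow : |(1 + y) ^ ν| ≤ (1 + |y|) ^ (n + ⌈ν⌉₊) := calc
    |(1 + y) ^ ν| = (1 + y) ^ ν := abs_of_nonneg (by positivity)
    _ ≤ (1 + |y|) ^ ν := by gcongr; exact le_abs_self y
    _ ≤ (1 + |y|) ^ ((n + ⌈ν⌉₊ : ℕ) : ℝ) :=
      Real.rpow_le_rpow_of_exponent_le h1 ((Nat.le_ceil ν).trans (by simp))
    _ = (1 + |y|) ^ (n + ⌈ν⌉₊) := Real.rpow_natCast _ _
  have hsum : |∑ i ∈ Finset.range n, Ring.choose ν i * y ^ i| ≤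
      (∑ i ∈ Finset.range n, |Ring.choose ν i|) * (1 + |y|) ^ (n + ⌈ν⌉₊) := by
    rw [Finset.sum_mul]
    refine (Finset.abs_sum_le_sum_abs _ _).trans (Finset.sum_le_sum fun i hi => ?_)
    rw [abs_mul, abs_pow]
    gcongr
    calc |y| ^ i ≤ (1 + |y|) ^ i := by gcongr; simp
      _ ≤ (1 + |y|) ^ (n + ⌈ν⌉₊) :=
        pow_le_pow_right₀ h1 (by have := Finset.mem_range.1 hi; omega)
  exact (abs_sub _ _).trans ((add_le_add hrpow hsum).trans_eq (by ring))

lemma exists_abs_rpow_one_add_sub_sum_choose_le (hν : 0 ≤ ν) (n : ℕ) :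
    ∃ C, ∃ L ≥ n, ∀ y : ℝ, -1 ≤ y →
      |(1 + y) ^ ν - ∑ i ∈ Finset.range n, Ring.choose ν i * y ^ i| ≤
        C * (|y| ^ n + |y| ^ L) := by
  obtain ⟨A, hA, hlocal⟩ := (rpow_one_add_sub_sum_choose_isBigO ν n).exists_pos
  obtain ⟨δ, hδ, hball⟩ := Metric.eventually_nhds_iff.1 hlocal.bound
  set B := (1 + ∑ i ∈ Finset.range n, |Ring.choose ν i|) * (δ⁻¹ + 1) ^ (n + ⌈ν⌉₊)
  have hB : 0 ≤ B := by positivity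
  refine ⟨A + B, n + ⌈ν⌉₊, by omega, fun y hy => ?_⟩
  rcases lt_or_ge |y| δ with hyδ | hyδ
  · calc _ ≤ A * |y| ^ n := by simpa using hball (by simpa using hyδ)
      _ ≤ (A + B) * (|y| ^ n + |y| ^ (n + ⌈ν⌉₊)) := by gcongr <;> simp [hB]
  · have hone : 1 + |y| ≤ (δ⁻¹ + 1) * |y| := by
      rw [add_mul, one_mul, inv_mul_eq_div]
      gcongr
      rwa [one_le_div hδ]
    calc _ ≤ _ := abs_rpow_one_add_sub_sum_choose_le hν n hy
      _ ≤ _ * ((δ⁻¹ + 1) * |y|) ^ (n + ⌈ν⌉₊) := by gcongr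
      _ = B * |y| ^ (n + ⌈ν⌉₊) := by rw [mul_pow, mul_assoc]
      _ ≤ (A + B) * (|y| ^ n + |y| ^ (n + ⌈ν⌉₊)) := by gcongr <;> simp [hA.le]

end Inequalities

section Measure

/-- Functions on `ℕ` that grow at most polynomially; `CMP` laws have all the corresponding
moments. -/
def polyGrowth : Subalgebra ℝ (ℕ → ℝ) where
  carrier := {f | ∃ n : ℕ, f =O[atTop] fun j => (j : ℝ) ^ n}
  mul_mem' := by
    rintro f g ⟨m, hf⟩ ⟨n, hg⟩
    exact ⟨m + n, (hf.mul hg).congr_right fun j => (pow_add _ _ _).symm⟩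
  add_mem' := by
    rintro f g ⟨m, hf⟩ ⟨n, hg⟩
    have hmono {k : ℕ} (hk : k ≤ max m n) :
        (fun j : ℕ => (j : ℝ) ^ k) =O[atTop] fun j : ℕ => (j : ℝ) ^ max m n :=
      IsBigO.pow_of_le_right (tendsto_natCast_atTop_atTop.eventually_ge_atTop (1 : ℝ)) hk
    exact ⟨max m n, (hf.trans (hmono (le_max_left _ _))).add (hg.trans (hmono (le_max_right _ _)))⟩
  algebraMap_mem' c := ⟨0, by simpa using isBigO_const_const c (one_ne_zero' ℝ) atTop⟩

lemma natCast_mem_polyGrowth : (fun j : ℕ => (j : ℝ)) ∈ polyGrowth :=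
  ⟨1, by simpa using isBigO_refl _ _⟩

lemma const_mem_polyGrowth (c : ℝ) : (fun _ : ℕ => c) ∈ polyGrowth := polyGrowth.algebraMap_mem c

lemma abs_mem_polyGrowth {f : ℕ → ℝ} (hf : f ∈ polyGrowth) : (fun j => |f j|) ∈ polyGrowth :=
  hf.imp fun _ h => h.abs_left

lemma comp_succ_mem_polyGrowth {f : ℕ → ℝ} (hf : f ∈ polyGrowth) :
    (fun j => f (j + 1)) ∈ polyGrowth := by
  obtain ⟨n, hn⟩ := hf
  have hsucc : (fun j : ℕ => ((j + 1 : ℕ) : ℝ)) =O[atTop] fun j : ℕ => (j : ℝ) := by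
    refine IsBigO.of_bound 2 ?_
    filter_upwards [eventually_ge_atTop 1] with j hj
    rw [RCLike.norm_natCast, RCLike.norm_natCast]
    exact_mod_cast (by omega : j + 1 ≤ 2 * j)
  exact ⟨n, (hn.comp_tendsto (tendsto_add_atTop_nat 1)).trans (hsucc.pow n)⟩

lemma natCast_rpow_mem_polyGrowth (ν : ℝ) : (fun j : ℕ => (j : ℝ) ^ ν) ∈ polyGrowth := by
  refine ⟨⌈ν⌉₊, IsBigO.of_bound 1 ?_⟩
  filter_upwards [eventually_ge_atTop 1] with j hj
  have hj' : (1 : ℝ) ≤ j := by exact_mod_cast hj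
  rw [one_mul, Real.norm_of_nonneg (by positivity), Real.norm_of_nonneg (by positivity),
    ← Real.rpow_natCast]
  exact Real.rpow_le_rpow_of_exponent_le hj' (Nat.le_ceil ν)

/-- The weights `(j!)^(-ν)` on `ℕ`, whose exponential tilts are the `CMP` laws. -/
noncomputable def cmpBase (ν : ℝ) : Measure ℕ :=
  .sum fun j => ENNReal.ofReal (((j.factorial : ℝ) ^ ν)⁻¹) • .dirac j

/-- The law `CMP(e^s, ν)`. The logarithmic parameter `s` makes it an exponential family. -/
noncomputable def cmpMeasure (ν s : ℝ) : Measure ℕ :=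
  (cmpBase ν).tilted fun j => s * j

variable {ν s : ℝ} {f : ℕ → ℝ}

lemma integrable_cmpBase_iff :
    Integrable f (cmpBase ν) ↔ Summable fun j => f j / (j.factorial : ℝ) ^ ν := by
  rw [cmpBase, integrable_sum_dirac_iff (fun _ => ENNReal.ofReal_ne_top),
    ← summable_norm_iff (f := fun j => f j / _)]
  refine summable_congr fun j => ?_
  rw [ENNReal.toReal_ofReal (by positivity), norm_div, inv_mul_eq_div,
    Real.norm_of_nonneg (by positivity : 0 ≤ (j.factorial : ℝ) ^ ν)]

lemma integral_cmpBase : ∫ j, f j ∂cmpBase ν = ∑' j, f j / (j.factorial : ℝ) ^ ν := by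
  rw [cmpBase, integral_sum_dirac fun _ => ENNReal.ofReal_ne_top]
  refine tsum_congr fun j => ?_
  rw [ENNReal.toReal_ofReal (by positivity), smul_eq_mul, inv_mul_eq_div]

lemma integrable_exp_cmpBase (hν : 0 < ν) (s : ℝ) :
    Integrable (fun j : ℕ => Real.exp (s * j)) (cmpBase ν) := by
  rw [integrable_cmpBase_iff]
  refine summable_of_ratio_test_tendsto_lt_one zero_lt_one
    (Eventually.of_forall fun j => by positivity) ?_
  have hlim : Tendsto (fun j : ℕ => Real.exp s * ((j + 1 : ℕ) : ℝ) ^ (-ν)) atTop (𝓝 0) := by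
    simpa using ((tendsto_rpow_neg_atTop hν).comp
      (tendsto_natCast_atTop_atTop.comp (tendsto_add_atTop_nat 1))).const_mul (Real.exp s)
  refine hlim.congr fun j => ?_
  rw [Real.norm_of_nonneg (by positivity), Real.norm_of_nonneg (by positivity),
    Nat.factorial_succ, Nat.cast_mul, Real.mul_rpow (by positivity) (by positivity),
    Real.rpow_neg (by positivity), Nat.cast_add_one, mul_add, mul_one, Real.exp_add]
  field_simp

lemma integrable_exp_mul_cmpBase (hν : 0 < ν) (s : ℝ) (hf : f ∈ polyGrowth) :
    Integrable (fun j : ℕ => Real.exp (s * j) * f j) (cmpBase ν) := by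
  obtain ⟨n, hn⟩ := hf
  have hexp : f =O[atTop] fun j : ℕ => Real.exp j :=
    hn.trans
      ((Real.isLittleO_pow_exp_atTop (n := n)).isBigO.comp_tendsto tendsto_natCast_atTop_atTop)
  rw [integrable_cmpBase_iff]
  refine summable_of_isBigO_nat (integrable_cmpBase_iff.1 (integrable_exp_cmpBase hν (s + 1))) ?_
  refine (((isBigO_refl (fun j : ℕ => Real.exp (s * j)) atTop).mul hexp).mul
    (isBigO_refl (fun j : ℕ => ((j.factorial : ℝ) ^ ν)⁻¹) atTop)).congr
    (fun j => (div_eq_mul_inv _ _).symm) fun j => ?_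
  rw [← Real.exp_add, add_mul, one_mul, div_eq_mul_inv]

lemma integrable_cmpMeasure (hν : 0 < ν) (hf : f ∈ polyGrowth) :
    Integrable f (cmpMeasure ν s) :=
  (integrable_tilted_iff (integrable_exp_cmpBase hν s) f).2 (integrable_exp_mul_cmpBase hν s hf)

lemma cmpBase_ne_zero : cmpBase ν ≠ 0 := by
  intro h
  have h0 := Measure.sum_eq_zero.1 h 0
  simp at h0

lemma isProbabilityMeasure_cmpMeasure (hν : 0 < ν) (s : ℝ) :
    IsProbabilityMeasure (cmpMeasure ν s) :=
  have : NeZero (cmpBase ν) := ⟨cmpBase_ne_zero⟩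
  isProbabilityMeasure_tilted (integrable_exp_cmpBase hν s)

lemma integral_cmpMeasure (ν s : ℝ) (f : ℕ → ℝ) : ∫ j, f j ∂cmpMeasure ν s =
    (∑' j : ℕ, f j * Real.exp s ^ j / (j.factorial : ℝ) ^ ν) / cmpZ (Real.exp s) ν := by
  have hexp (j : ℕ) : Real.exp (s * j) = Real.exp s ^ j := by rw [mul_comm, Real.exp_nat_mul]
  simp only [cmpMeasure, integral_tilted, integral_cmpBase, hexp, cmpZ, smul_eq_mul]
  rw [← tsum_div_const]
  exact tsum_congr fun j => by ring

lemma integral_sum_mul_pow_cmpMeasure (hν : 0 < ν) (hf : f ∈ polyGrowth) (t : Finset ℕ)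
    (c : ℕ → ℝ) (p : ℕ → ℕ) : ∫ j, ∑ i ∈ t, c i * f j ^ p i ∂cmpMeasure ν s =
      ∑ i ∈ t, c i * ∫ j, f j ^ p i ∂cmpMeasure ν s := by
  have hpow (k : ℕ) : (fun j => f j ^ k) ∈ polyGrowth := polyGrowth.pow_mem hf k
  rw [integral_finsetSum _ fun i _ => (integrable_cmpMeasure hν (hpow (p i))).const_mul (c i)]
  simp only [integral_const_mul]

lemma integral_add_const_pow_cmpMeasure (hν : 0 < ν) (hf : f ∈ polyGrowth) (c : ℝ) (k : ℕ) :
    ∫ j, (f j + c) ^ k ∂cmpMeasure ν s =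
      ∑ r ∈ Finset.range (k + 1), k.choose r * c ^ r * ∫ j, f j ^ (k - r) ∂cmpMeasure ν s := by
  rw [← integral_sum_mul_pow_cmpMeasure hν hf]
  refine integral_congr_ae (Eventually.of_forall fun j => ?_)
  simp only [add_comm (f j) c, add_pow]
  exact Finset.sum_congr rfl fun r _ => by ring

lemma cmpMean_exp (s ν : ℝ) : cmpMean (Real.exp s) ν = ∫ j, (j : ℝ) ∂cmpMeasure ν s :=
  (integral_cmpMeasure ν s _).symm

lemma cmpCentralMoment_exp (k : ℕ) (s ν : ℝ) : cmpCentralMoment k (Real.exp s) ν =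
    ∫ j, ((j : ℝ) - ∫ i, (i : ℝ) ∂cmpMeasure ν s) ^ k ∂cmpMeasure ν s := by
  rw [integral_cmpMeasure, ← cmpMean_exp, cmpCentralMoment]

theorem integral_rpow_mul_cmpMeasure (hν : ν ≠ 0) (s : ℝ) (f : ℕ → ℝ) :
    ∫ j, (j : ℝ) ^ ν * f j ∂cmpMeasure ν s = Real.exp s * ∫ j, f (j + 1) ∂cmpMeasure ν s := by
  rw [integral_cmpMeasure, integral_cmpMeasure, mul_div_assoc', ← tsum_mul_left]
  congr 1
  have hsupp : Function.support (fun j : ℕ => (j : ℝ) ^ ν * f j * Real.exp s ^ j /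
      (j.factorial : ℝ) ^ ν) ⊆ Set.range Nat.succ := by
    intro j hj
    refine Nat.range_succ ▸ Nat.pos_of_ne_zero fun h0 => hj ?_
    simp [h0, Real.zero_rpow hν]
  rw [← Nat.succ_injective.tsum_eq hsupp]
  refine tsum_congr fun j => ?_
  rw [Nat.succ_eq_add_one, Nat.factorial_succ, Nat.cast_mul,
    Real.mul_rpow (by positivity) (by positivity)]
  have : ((j + 1 : ℕ) : ℝ) ^ ν ≠ 0 := by positivity
  field_simp
  ring

end Measure

section Moments

/-- The law `CMP(ε^(-ν), ν)`, parametrized so that its mean is asymptotic to `1 / ε`. -/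
noncomputable def cmpLaw (ν ε : ℝ) : Measure ℕ :=
  cmpMeasure ν (-ν * Real.log ε)

/-- The relative deviation of `j` from the leading order `1 / ε` of the mean of `cmpLaw ν ε`. -/
def relDev (ε : ℝ) (j : ℕ) : ℝ :=
  ε * j - 1

/-- The moments of the relative deviation. -/
noncomputable def cmpMoment (ν : ℝ) (k : ℕ) (ε : ℝ) : ℝ :=
  ∫ j, relDev ε j ^ k ∂cmpLaw ν ε

variable {ν ε : ℝ} {f g : ℕ → ℝ}

lemma relDev_succ (ε : ℝ) (j : ℕ) : relDev ε (j + 1) = relDev ε j + ε := by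
  rw [relDev, relDev, Nat.cast_add_one]
  ring

lemma relDev_add_one (ε : ℝ) (j : ℕ) : relDev ε j + 1 = ε * j := by
  rw [relDev, sub_add_cancel]

lemma neg_one_le_relDev (hε : 0 < ε) (j : ℕ) : -1 ≤ relDev ε j := by
  have : 0 ≤ ε * j := by positivity
  simpa [relDev] using this

lemma relDev_mem_polyGrowth (ε : ℝ) : relDev ε ∈ polyGrowth :=
  polyGrowth.sub_mem (polyGrowth.smul_mem natCast_mem_polyGrowth ε) (const_mem_polyGrowth 1)

lemma relDev_pow_mem_polyGrowth (ε : ℝ) (k : ℕ) : (fun j => relDev ε j ^ k) ∈ polyGrowth :=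
  polyGrowth.pow_mem (relDev_mem_polyGrowth ε) k

lemma one_add_relDev_rpow (hε : 0 < ε) (j : ℕ) : (1 + relDev ε j) ^ ν = ε ^ ν * (j : ℝ) ^ ν := by
  rw [relDev, add_sub_cancel, Real.mul_rpow hε.le j.cast_nonneg]

lemma one_add_relDev_rpow_mem_polyGrowth (hε : 0 < ε) :
    (fun j => (1 + relDev ε j) ^ ν) ∈ polyGrowth := by
  simp only [one_add_relDev_rpow hε]
  exact polyGrowth.smul_mem (natCast_rpow_mem_polyGrowth ν) (ε ^ ν)

lemma isProbabilityMeasure_cmpLaw (hν : 0 < ν) (ε : ℝ) : IsProbabilityMeasure (cmpLaw ν ε) :=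
  isProbabilityMeasure_cmpMeasure hν _

lemma integrable_cmpLaw (hν : 0 < ν) (hf : f ∈ polyGrowth) : Integrable f (cmpLaw ν ε) :=
  integrable_cmpMeasure hν hf

lemma integral_cmpLaw_mono (hν : 0 < ν) (hf : f ∈ polyGrowth) (hg : g ∈ polyGrowth)
    (h : ∀ j, f j ≤ g j) : ∫ j, f j ∂cmpLaw ν ε ≤ ∫ j, g j ∂cmpLaw ν ε :=
  integral_mono (integrable_cmpLaw hν hf) (integrable_cmpLaw hν hg) h

lemma integral_one_add_relDev_rpow_mul (hν : ν ≠ 0) (hε : 0 < ε) (f : ℕ → ℝ) :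
    ∫ j, (1 + relDev ε j) ^ ν * f j ∂cmpLaw ν ε = ∫ j, f (j + 1) ∂cmpLaw ν ε := by
  simp only [one_add_relDev_rpow hε, mul_assoc, integral_const_mul]
  have hexp : ε ^ ν * Real.exp (-ν * Real.log ε) = 1 := by
    rw [Real.rpow_def_of_pos hε, ← Real.exp_add, mul_comm, ← add_mul, add_neg_cancel, zero_mul,
      Real.exp_zero]
  rw [cmpLaw, integral_rpow_mul_cmpMeasure hν, ← mul_assoc, hexp, one_mul]

lemma integral_rpow_sub_one_mul (hν : 0 < ν) (hε : 0 < ε) (hf : f ∈ polyGrowth) :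
    ∫ j, ((1 + relDev ε j) ^ ν - 1) * f j ∂cmpLaw ν ε =
      ∫ j, (f (j + 1) - f j) ∂cmpLaw ν ε := by
  have hmul : (fun j => (1 + relDev ε j) ^ ν * f j) ∈ polyGrowth :=
    polyGrowth.mul_mem (one_add_relDev_rpow_mem_polyGrowth hε) hf
  simp only [sub_mul, one_mul]
  rw [integral_sub (integrable_cmpLaw hν hmul) (integrable_cmpLaw hν hf),
    integral_sub (integrable_cmpLaw hν (comp_succ_mem_polyGrowth hf)) (integrable_cmpLaw hν hf),
    integral_one_add_relDev_rpow_mul hν.ne' hε]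

lemma cmpMoment_zero (hν : 0 < ν) : cmpMoment ν 0 = fun _ => 1 := by
  ext ε
  have := isProbabilityMeasure_cmpLaw hν ε
  simp [cmpMoment]

lemma cmpMoment_even_nonneg {k : ℕ} (hk : Even k) : 0 ≤ cmpMoment ν k ε :=
  integral_nonneg fun _ => hk.pow_nonneg _

lemma exists_cmpMoment_even_succ_le (hν : 0 < ν) (m : ℕ) :
    ∃ C > 0, ∀ ε : ℝ, 0 < ε → ε ≤ 1 → min 1 ν * cmpMoment ν (2 * m + 2) ε ≤
      C * (ε * (cmpMoment ν (2 * m) ε + cmpMoment ν (2 * m + 2) ε + ε ^ m)) := by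
  obtain ⟨C, hC, hshift⟩ := exists_shift_sub_le m
  refine ⟨C, hC, fun ε hε hε1 => ?_⟩
  have := isProbabilityMeasure_cmpLaw hν ε
  have hpow := relDev_pow_mem_polyGrowth ε
  -- The factor `2 + relDev ε j = 1 + ε * j` compensates for the slow growth of `x ^ ν` for `ν < 1`.
  let φ : ℕ → ℝ := fun j => (2 + relDev ε j) * relDev ε j ^ (2 * m + 1)
  have hφ : φ ∈ polyGrowth :=
    polyGrowth.mul_mem
      (polyGrowth.add_mem (const_mem_polyGrowth 2) (relDev_mem_polyGrowth ε)) (hpow _)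
  have hsum : (fun j => relDev ε j ^ (2 * m) + relDev ε j ^ (2 * m + 2)) ∈ polyGrowth :=
    polyGrowth.add_mem (hpow _) (hpow _)
  calc min 1 ν * cmpMoment ν (2 * m + 2) ε
      = ∫ j, min 1 ν * relDev ε j ^ (2 * m + 2) ∂cmpLaw ν ε := (integral_const_mul _ _).symm
    _ ≤ ∫ j, ((1 + relDev ε j) ^ ν - 1) * φ j ∂cmpLaw ν ε := by
      refine integral_cmpLaw_mono hν (polyGrowth.smul_mem (hpow _) _) (polyGrowth.mul_mem
        (polyGrowth.sub_mem (one_add_relDev_rpow_mem_polyGrowth hε) (const_mem_polyGrowth 1)) hφ)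
        fun j => ?_
      have hcoercive := mul_le_mul_of_nonneg_right (min_one_mul_sq_le_rpow_sub_one_mul hν
        (by linarith [neg_one_le_relDev hε j] : 0 ≤ 1 + relDev ε j))
        ((even_two_mul m).pow_nonneg (relDev ε j))
      refine (Eq.trans_le ?_ hcoercive).trans_eq ?_
      · ring
      · simp only [φ]
        ring
    _ = ∫ j, (φ (j + 1) - φ j) ∂cmpLaw ν ε := integral_rpow_sub_one_mul hν hε hφ
    _ ≤ ∫ j, C * (ε * (relDev ε j ^ (2 * m) + relDev ε j ^ (2 * m + 2) + ε ^ m)) ∂cmpLaw ν ε := by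
      refine integral_cmpLaw_mono hν (polyGrowth.sub_mem (comp_succ_mem_polyGrowth hφ) hφ)
        (polyGrowth.smul_mem (polyGrowth.smul_mem
          (polyGrowth.add_mem hsum (const_mem_polyGrowth _)) _) _) fun j => ?_
      simpa only [φ, relDev_succ] using hshift _ _ hε hε1
    _ = C * (ε * (cmpMoment ν (2 * m) ε + cmpMoment ν (2 * m + 2) ε + ε ^ m)) := by
      rw [integral_const_mul, integral_const_mul,
        integral_add (integrable_cmpLaw hν hsum) (integrable_const _),
        integral_add (integrable_cmpLaw hν (hpow _)) (integrable_cmpLaw hν (hpow _)),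
        integral_const, probReal_univ, one_smul, cmpMoment, cmpMoment]

theorem cmpMoment_even_isBigO (hν : 0 < ν) (m : ℕ) :
    cmpMoment ν (2 * m) =O[𝓝[>] 0] fun ε => ε ^ m := by
  induction m with
  | zero => simpa [cmpMoment_zero hν] using
      isBigO_refl (fun _ : ℝ => (1 : ℝ)) (𝓝[>] 0)
  | succ m ih =>
    obtain ⟨K, hK⟩ := ih.bound
    obtain ⟨C, hC, hrec⟩ := exists_cmpMoment_even_succ_le hν m
    have hc : 0 < min 1 ν := lt_min one_pos hν
    refine IsBigO.of_bound (2 * C * (K + 1) / min 1 ν) ?_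
    filter_upwards [hK, Ioo_mem_nhdsGT (show (0 : ℝ) < min 1 (min 1 ν / (2 * C)) by positivity)]
      with ε hKε hε
    obtain ⟨hε1, hεC⟩ := lt_min_iff.1 hε.2
    rw [lt_div_iff₀ (by positivity)] at hεC
    have h0 : 0 ≤ cmpMoment ν (2 * m + 2) ε := cmpMoment_even_nonneg ((even_two_mul m).add even_two)
    rw [Real.norm_of_nonneg (cmpMoment_even_nonneg (even_two_mul m)),
      Real.norm_of_nonneg (pow_nonneg hε.1.le m)] at hKε
    rw [mul_add, mul_one, Real.norm_of_nonneg h0, Real.norm_of_nonneg (pow_nonneg hε.1.le _),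
      div_mul_eq_mul_div, le_div_iff₀ hc]
    have hlower := mul_le_mul_of_nonneg_left (add_le_add_left hKε (ε ^ m)) (mul_pos hC hε.1).le
    have habsorb := mul_le_mul_of_nonneg_right hεC.le h0
    rw [pow_succ]
    nlinarith [hrec ε hε.1 hε1.le]

lemma integral_abs_relDev_pow_isBigO (hν : 0 < ν) {p N : ℕ} (h : 2 * N ≤ p) :
    (fun ε => ∫ j, |relDev ε j| ^ p ∂cmpLaw ν ε) =O[𝓝[>] 0] fun ε => ε ^ N := by
  have heven : (fun ε => cmpMoment ν (2 * N) ε + cmpMoment ν (2 * p) ε) =O[𝓝[>] 0]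
      fun ε => ε ^ N := (cmpMoment_even_isBigO hν N).add
    ((cmpMoment_even_isBigO hν p).trans (isBigO_pow_pow_nhdsGT_zero (by omega)))
  refine IsBigO.trans (IsBigO.of_norm_le fun ε => ?_) heven
  have hpow := relDev_pow_mem_polyGrowth ε
  rw [Real.norm_of_nonneg (integral_nonneg fun _ => by positivity), cmpMoment, cmpMoment,
    ← integral_add (integrable_cmpLaw hν (hpow _)) (integrable_cmpLaw hν (hpow _))]
  refine integral_cmpLaw_mono hν
    (polyGrowth.pow_mem (abs_mem_polyGrowth (relDev_mem_polyGrowth ε)) p)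
    (polyGrowth.add_mem (hpow _) (hpow _)) fun j => ?_
  rw [← (even_two_mul N).pow_abs, ← (even_two_mul p).pow_abs]
  exact pow_le_pow_add_pow (abs_nonneg _) h (by omega)

end Moments

section MomentExpansion

variable {ν ε : ℝ}

lemma sum_mul_relDev_pow_mem_polyGrowth (s : Finset ℕ) (c : ℕ → ℝ) (p : ℕ → ℕ) :
    (fun j => ∑ i ∈ s, c i * relDev ε j ^ p i) ∈ polyGrowth := by
  convert polyGrowth.sum_mem fun i (_ : i ∈ s) =>
    polyGrowth.smul_mem (relDev_pow_mem_polyGrowth ε (p i)) (c i) using 1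
  ext j
  simp

lemma integral_relDev_succ_pow (hν : 0 < ν) (k : ℕ) :
    ∫ j, relDev ε (j + 1) ^ k ∂cmpLaw ν ε =
      ∑ r ∈ Finset.range (k + 1), k.choose r * ε ^ r * cmpMoment ν (k - r) ε := by
  simp only [relDev_succ]
  exact integral_add_const_pow_cmpMeasure hν (relDev_mem_polyGrowth ε) ε k

lemma isBigO_integral_rpow_mul_pow_sub (hν : 0 < ν) {N k n : ℕ} (h : 2 * N ≤ k + n) :
    (fun ε => ∫ j, (1 + relDev ε j) ^ ν * relDev ε j ^ k ∂cmpLaw ν ε -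
      ∑ i ∈ Finset.range n, Ring.choose ν i * cmpMoment ν (k + i) ε) =O[𝓝[>] 0]
        fun ε => ε ^ N := by
  obtain ⟨C, L, hL, hC⟩ := exists_abs_rpow_one_add_sub_sum_choose_le hν.le n
  have hbound := ((integral_abs_relDev_pow_isBigO hν h).add
    (integral_abs_relDev_pow_isBigO (p := k + L) hν (by omega))).const_mul_left C
  refine IsBigO.trans (IsBigO.of_norm_eventuallyLE ?_) hbound
  filter_upwards [self_mem_nhdsWithin] with ε (hε : 0 < ε)
  have habs (p : ℕ) : (fun j => |relDev ε j| ^ p) ∈ polyGrowth :=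
    polyGrowth.pow_mem (abs_mem_polyGrowth (relDev_mem_polyGrowth ε)) p
  have hmain : (fun j => (1 + relDev ε j) ^ ν * relDev ε j ^ k) ∈ polyGrowth :=
    polyGrowth.mul_mem (one_add_relDev_rpow_mem_polyGrowth hε) (relDev_pow_mem_polyGrowth ε k)
  have htaylor := sum_mul_relDev_pow_mem_polyGrowth (ε := ε) (Finset.range n)
    (Ring.choose ν) (k + ·)
  have hsum : ∫ j, ∑ i ∈ Finset.range n, Ring.choose ν i * relDev ε j ^ (k + i) ∂cmpLaw ν ε =
      ∑ i ∈ Finset.range n, Ring.choose ν i * cmpMoment ν (k + i) ε :=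
    integral_sum_mul_pow_cmpMeasure hν (relDev_mem_polyGrowth ε) _ _ _
  rw [← hsum,
    ← integral_sub (integrable_cmpLaw hν hmain) (integrable_cmpLaw hν htaylor),
    ← integral_add (integrable_cmpLaw hν (habs _)) (integrable_cmpLaw hν (habs _)),
    ← integral_const_mul]
  refine (norm_integral_le_integral_norm _).trans (integral_cmpLaw_mono hν
    (abs_mem_polyGrowth (polyGrowth.sub_mem hmain htaylor))
    (polyGrowth.smul_mem (polyGrowth.add_mem (habs _) (habs _)) C) fun j => ?_)
  calc ‖(1 + relDev ε j) ^ ν * relDev ε j ^ k -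
        ∑ i ∈ Finset.range n, Ring.choose ν i * relDev ε j ^ (k + i)‖
      = |(1 + relDev ε j) ^ ν - ∑ i ∈ Finset.range n, Ring.choose ν i * relDev ε j ^ i| *
          |relDev ε j| ^ k := by
        rw [Real.norm_eq_abs, ← abs_pow, ← abs_mul, sub_mul, Finset.sum_mul]
        simp only [add_comm k, pow_add, mul_assoc]
    _ ≤ C * (|relDev ε j| ^ n + |relDev ε j| ^ L) * |relDev ε j| ^ k := by
        gcongr
        exact hC _ (neg_one_le_relDev hε j)
    _ = C * (|relDev ε j| ^ (k + n) + |relDev ε j| ^ (k + L)) := by ring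

lemma isBigO_mul_cmpMoment_succ_sub (hν : 0 < ν) {N k n : ℕ} (h : 2 * N ≤ k + n + 2) :
    (fun ε => ν * cmpMoment ν (k + 1) ε -
      (∑ r ∈ Finset.range k, k.choose (r + 1) * (ε ^ (r + 1) * cmpMoment ν (k - (r + 1)) ε) -
        ∑ i ∈ Finset.range n, Ring.choose ν (i + 2) * cmpMoment ν (k + 2 + i) ε)) =O[𝓝[>] 0]
      fun ε => ε ^ N := by
  refine (isBigO_integral_rpow_mul_pow_sub (k := k) (n := n + 2) hν (by omega)).neg_left.congr' ?_
    EventuallyEq.rfl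
  filter_upwards [self_mem_nhdsWithin] with ε (hε : 0 < ε)
  rw [integral_one_add_relDev_rpow_mul hν.ne' hε, integral_relDev_succ_pow hν,
    Finset.sum_range_succ', Finset.sum_range_succ', Finset.sum_range_succ']
  simp only [Nat.choose_zero_right, Ring.choose_zero_right, Ring.choose_one_right, pow_zero,
    Nat.sub_zero, Nat.cast_one, add_zero, zero_add, one_mul, mul_assoc, add_assoc, add_comm 2]
  ring

/-- The coefficient of `ε ^ s` in the asymptotic expansion of `cmpMoment ν k ε`, obtained by solving
the Stein identity for the function `relDev ε ^ k` in the moment of order `k + 1`. -/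
noncomputable def cmpMomentCoeff (ν : ℝ) : ℕ → ℕ → ℝ
  | s, 0 => if s = 0 then 1 else 0
  | s, k + 1 =>
    (∑ r : Fin (min k s), k.choose (r + 1) * cmpMomentCoeff ν (s - (r + 1)) (k - (r + 1)) -
      ∑ i : Fin (2 * s - 1 - k), Ring.choose ν (i + 2) * cmpMomentCoeff ν s (k + 2 + i)) / ν
termination_by s k => (s, 2 * s - k)
decreasing_by
  · exact Prod.Lex.left _ _ (by omega)
  · exact Prod.Lex.right _ (by omega)

/-- The formal asymptotic expansion of `cmpMoment ν k ε`. -/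
noncomputable def cmpMomentSeries (ν : ℝ) (k : ℕ) : ℝ⟦X⟧ :=
  .mk fun s => cmpMomentCoeff ν s k

lemma cmpMomentSeries_zero (ν : ℝ) : cmpMomentSeries ν 0 = 1 := by
  ext s
  rw [cmpMomentSeries, PowerSeries.coeff_mk, cmpMomentCoeff, PowerSeries.coeff_one]

lemma cmpMomentCoeff_eq_zero (ν : ℝ) (s k : ℕ) (h : 2 * s < k) : cmpMomentCoeff ν s k = 0 := by
  induction k using Nat.strong_induction_on generalizing s with
  | _ k ih =>
    obtain ⟨k, rfl⟩ := Nat.exists_eq_add_one_of_ne_zero (by omega : k ≠ 0)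
    have hempty : IsEmpty (Fin (2 * s - 1 - k)) := by
      rw [show 2 * s - 1 - k = 0 by omega]
      infer_instance
    rw [cmpMomentCoeff, Finset.univ_eq_empty (α := Fin (2 * s - 1 - k)), Finset.sum_empty,
      Finset.sum_eq_zero, sub_zero, zero_div]
    intro r _
    rw [ih _ (by omega) _ (by omega), mul_zero]

lemma X_pow_dvd_smul_cmpMomentSeries_succ_sub (hν : ν ≠ 0) {N k n : ℕ} (h : 2 * N ≤ k + n + 2) :
    PowerSeries.X ^ N ∣
      (∑ r ∈ Finset.range k, (k.choose (r + 1) : ℝ) •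
          (PowerSeries.X ^ (r + 1) * cmpMomentSeries ν (k - (r + 1))) -
        ∑ i ∈ Finset.range n, Ring.choose ν (i + 2) • cmpMomentSeries ν (k + 2 + i)) -
      ν • cmpMomentSeries ν (k + 1) := by
  rw [PowerSeries.X_pow_dvd_iff]
  intro s hs
  simp only [map_sub, map_sum, PowerSeries.coeff_smul, PowerSeries.coeff_X_pow_mul',
    cmpMomentSeries, PowerSeries.coeff_mk, smul_eq_mul]
  have hlow : ∑ r ∈ Finset.range k, (k.choose (r + 1) : ℝ) *
      (if r + 1 ≤ s then cmpMomentCoeff ν (s - (r + 1)) (k - (r + 1)) else 0) =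
        ∑ r ∈ Finset.range (min k s),
          k.choose (r + 1) * cmpMomentCoeff ν (s - (r + 1)) (k - (r + 1)) := by
    simp only [mul_ite, mul_zero, ← Finset.sum_filter]
    congr 1
    ext r
    simp only [Finset.mem_filter, Finset.mem_range]
    omega
  have hhigh : ∑ i ∈ Finset.range (2 * s - 1 - k), Ring.choose ν (i + 2) *
      cmpMomentCoeff ν s (k + 2 + i) =
        ∑ i ∈ Finset.range n, Ring.choose ν (i + 2) * cmpMomentCoeff ν s (k + 2 + i) := by
    refine Finset.sum_subset (Finset.range_subset_range.2 (by omega)) fun i _ hi => ?_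
    rw [Finset.mem_range] at hi
    rw [cmpMomentCoeff_eq_zero ν s _ (by omega), mul_zero]
  rw [cmpMomentCoeff, mul_div_cancel₀ _ hν, hlow, ← hhigh, ← Fin.sum_univ_eq_sum_range,
    ← Fin.sum_univ_eq_sum_range, sub_self]

lemma hasExpansionUpTo_cmpMoment_of_le (hν : 0 < ν) {N k : ℕ} (h : 2 * N ≤ k) :
    HasExpansionUpTo N (cmpMoment ν k) (cmpMomentSeries ν k) := by
  have hbound : cmpMoment ν k =O[𝓝[>] 0] fun ε => ε ^ N := by
    refine (IsBigO.of_norm_le fun ε => ?_).trans (integral_abs_relDev_pow_isBigO hν h)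
    simpa only [cmpMoment, norm_pow, Real.norm_eq_abs] using
      norm_integral_le_integral_norm (μ := cmpLaw ν ε) fun j => relDev ε j ^ k
  have hdvd : PowerSeries.X ^ N ∣ 0 - cmpMomentSeries ν k := by
    rw [zero_sub, dvd_neg, PowerSeries.X_pow_dvd_iff]
    intro s hs
    rw [cmpMomentSeries, PowerSeries.coeff_mk, cmpMomentCoeff_eq_zero ν s k (by omega)]
  exact (HasExpansionUpTo.zero.congr_isBigO (by simpa using hbound)).of_X_pow_dvd_sub hdvd

lemma hasExpansionUpTo_cmpMoment_succ (hν : 0 < ν) {N k : ℕ}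
    (hlow : ∀ r < k,
      HasExpansionUpTo N (cmpMoment ν (k - (r + 1))) (cmpMomentSeries ν (k - (r + 1))))
    (hhigh : ∀ i,
      HasExpansionUpTo (N + 1) (cmpMoment ν (k + 2 + i)) (cmpMomentSeries ν (k + 2 + i))) :
    HasExpansionUpTo (N + 1) (cmpMoment ν (k + 1)) (cmpMomentSeries ν (k + 1)) := by
  have h : 2 * (N + 1) ≤ k + 2 * N + 2 := by omega
  have hrhs := (HasExpansionUpTo.sum fun r (hr : r ∈ Finset.range k) =>
    ((hasExpansionUpTo_pow_mul_iff (r := r + 1)).2 (hlow r (Finset.mem_range.1 hr))).mono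
      (by omega : N + 1 ≤ r + 1 + N) |>.const_mul (k.choose (r + 1) : ℝ)).sub
    (HasExpansionUpTo.sum fun i (_ : i ∈ Finset.range (2 * N)) =>
      (hhigh i).const_mul (Ring.choose ν (i + 2)))
  have hmul := ((hrhs.congr_isBigO (isBigO_mul_cmpMoment_succ_sub hν h)).of_X_pow_dvd_sub
    (X_pow_dvd_smul_cmpMomentSeries_succ_sub hν.ne' h)).const_mul ν⁻¹
  simpa [smul_smul, hν.ne'] using hmul

theorem hasExpansion_cmpMoment (hν : 0 < ν) (k : ℕ) :
    HasExpansion (cmpMoment ν k) (cmpMomentSeries ν k) := by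
  intro N
  induction N generalizing k with
  | zero => exact hasExpansionUpTo_cmpMoment_of_le hν (by omega)
  | succ N ih =>
    obtain ⟨d, hd⟩ : ∃ d, 2 * (N + 1) ≤ k + d := ⟨2 * (N + 1), by omega⟩
    induction d using Nat.strong_induction_on generalizing k with
    | _ d ihd =>
      rcases le_or_gt (2 * (N + 1)) k with hk | hk
      · exact hasExpansionUpTo_cmpMoment_of_le hν hk
      obtain _ | k := k
      · rw [cmpMoment_zero hν, cmpMomentSeries_zero]
        exact HasExpansionUpTo.one
      · exact hasExpansionUpTo_cmpMoment_succ hν (fun r _ => ih _)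
          fun i => ihd (d - 1) (by omega) _ (by omega)

end MomentExpansion

section Cumulants

lemma integral_tilted_pow_eq_iteratedDeriv_mgf_div {Ω : Type*} [MeasurableSpace Ω] {μ : Measure Ω}
    {X : Ω → ℝ} {t : ℝ} (ht : t ∈ interior (integrableExpSet X μ)) (n : ℕ) :
    ∫ ω, X ω ^ n ∂μ.tilted (t * X ·) = iteratedDeriv n (mgf X μ) t / mgf X μ t := by
  rw [integral_tilted_mul_eq_mgf, iteratedDeriv_mgf ht, ← integral_div]
  congr 1 with ω
  rw [smul_eq_mul]
  ring

/-- The recursion between the moments and the cumulants of an exponential family is the Leibniz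
rule for `mgf' = cgf' * mgf`. -/
lemma integral_tilted_pow_succ {Ω : Type*} [MeasurableSpace Ω] {μ : Measure Ω} {X : Ω → ℝ} {t : ℝ}
    (ht : t ∈ interior (integrableExpSet X μ)) (n : ℕ) :
    ∫ ω, X ω ^ (n + 1) ∂μ.tilted (t * X ·) = ∑ i ∈ Finset.range (n + 1),
      n.choose i * iteratedDeriv (i + 1) (cgf X μ) t * ∫ ω, X ω ^ (n - i) ∂μ.tilted (t * X ·) := by
  rcases eq_or_ne μ 0 with rfl | hμ
  · simp
  have hderiv : deriv (mgf X μ) =ᶠ[𝓝 t] deriv (cgf X μ) * mgf X μ := by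
    filter_upwards [isOpen_interior.eventually_mem ht] with u hu
    rw [Pi.mul_apply, deriv_cgf hu, deriv_mgf hu,
      div_mul_cancel₀ _ (mgf_pos' hμ (interior_subset (s := integrableExpSet X μ) hu)).ne']
  simp only [integral_tilted_pow_eq_iteratedDeriv_mgf_div ht]
  rw [iteratedDeriv_succ', hderiv.iteratedDeriv_eq,
    iteratedDeriv_mul (analyticAt_cgf ht).deriv.contDiffAt (analyticAt_mgf ht).contDiffAt,
    Finset.sum_div]
  simp only [← iteratedDeriv_succ', mul_div_assoc]

/-- The `n`-th cumulant of `cmpLaw ν ε`. -/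
noncomputable def cmpCumulant (ν : ℝ) (n : ℕ) (ε : ℝ) : ℝ :=
  iteratedDeriv n (cgf (fun j : ℕ => (j : ℝ)) (cmpBase ν)) (-ν * Real.log ε)

variable {ν : ℝ}

lemma mem_interior_integrableExpSet_cmpBase (hν : 0 < ν) (s : ℝ) :
    s ∈ interior (integrableExpSet (fun j : ℕ => (j : ℝ)) (cmpBase ν)) := by
  rw [show integrableExpSet _ _ = Set.univ from
    Set.eq_univ_of_forall fun t => integrable_exp_cmpBase hν t]
  simp

lemma integral_natCast_pow_succ_cmpLaw (hν : 0 < ν) (n : ℕ) (ε : ℝ) :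
    ∫ j, (j : ℝ) ^ (n + 1) ∂cmpLaw ν ε = ∑ i ∈ Finset.range (n + 1),
      n.choose i * cmpCumulant ν (i + 1) ε * ∫ j, (j : ℝ) ^ (n - i) ∂cmpLaw ν ε :=
  integral_tilted_pow_succ (mem_interior_integrableExpSet_cmpBase hν _) n

lemma integral_natCast_cmpLaw (hν : 0 < ν) (ε : ℝ) :
    ∫ j, (j : ℝ) ∂cmpLaw ν ε = cmpCumulant ν 1 ε := by
  have := isProbabilityMeasure_cmpLaw hν ε
  simpa using integral_natCast_pow_succ_cmpLaw hν 0 ε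

lemma integral_sub_mean_pow_cmpLaw (hν : 0 < ν) (k : ℕ) (ε : ℝ) :
    ∫ j, ((j : ℝ) - cmpCumulant ν 1 ε) ^ k ∂cmpLaw ν ε = ∑ r ∈ Finset.range (k + 1),
      k.choose r * (-cmpCumulant ν 1 ε) ^ r * ∫ j, (j : ℝ) ^ (k - r) ∂cmpLaw ν ε :=
  integral_add_const_pow_cmpMeasure hν natCast_mem_polyGrowth _ k

lemma centralMoment_two_cmpLaw (hν : 0 < ν) (ε : ℝ) :
    ∫ j, ((j : ℝ) - cmpCumulant ν 1 ε) ^ 2 ∂cmpLaw ν ε = cmpCumulant ν 2 ε := by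
  have := isProbabilityMeasure_cmpLaw hν ε
  have hsq : ∫ j, (j : ℝ) ^ 2 ∂cmpLaw ν ε = cmpCumulant ν 1 ε ^ 2 + cmpCumulant ν 2 ε := by
    simpa [Finset.sum_range_succ, integral_natCast_cmpLaw hν, ← sq] using
      integral_natCast_pow_succ_cmpLaw hν 1 ε
  rw [integral_sub_mean_pow_cmpLaw hν]
  simp only [Finset.sum_range_succ, Finset.sum_range_zero, Nat.choose, Nat.reduceSub, pow_zero,
    pow_one, integral_const, probReal_univ, integral_natCast_cmpLaw hν, hsq, smul_eq_mul]
  push_cast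
  ring

lemma centralMoment_four_cmpLaw (hν : 0 < ν) (ε : ℝ) :
    ∫ j, ((j : ℝ) - cmpCumulant ν 1 ε) ^ 4 ∂cmpLaw ν ε =
      cmpCumulant ν 4 ε + 3 * cmpCumulant ν 2 ε ^ 2 := by
  have := isProbabilityMeasure_cmpLaw hν ε
  have h2 := integral_natCast_pow_succ_cmpLaw hν 1 ε
  have h3 := integral_natCast_pow_succ_cmpLaw hν 2 ε
  have h4 := integral_natCast_pow_succ_cmpLaw hν 3 ε
  rw [integral_sub_mean_pow_cmpLaw hν]
  simp only [Finset.sum_range_succ, Finset.sum_range_zero, Nat.choose, Nat.reduceAdd,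
    Nat.reduceSub, pow_zero, pow_one, integral_const, probReal_univ, integral_natCast_cmpLaw hν,
    smul_eq_mul] at h2 h3 h4 ⊢
  rw [h4, h3, h2]
  push_cast
  ring

lemma cmpExcessKurtosis_exp (hν : 0 < ν) {ε : ℝ} (h : cmpCumulant ν 2 ε ≠ 0) :
    cmpExcessKurtosis (Real.exp (-ν * Real.log ε)) ν =
      cmpCumulant ν 4 ε / cmpCumulant ν 2 ε ^ 2 := by
  rw [cmpExcessKurtosis, cmpCentralMoment_exp, cmpCentralMoment_exp, ← cmpLaw,
    integral_natCast_cmpLaw hν, centralMoment_two_cmpLaw hν, centralMoment_four_cmpLaw hν]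
  field_simp
  ring

lemma pow_mul_integral_natCast_pow_cmpLaw (hν : 0 < ν) (n : ℕ) (ε : ℝ) :
    ε ^ n * ∫ j, (j : ℝ) ^ n ∂cmpLaw ν ε =
      ∑ r ∈ Finset.range (n + 1), n.choose r * cmpMoment ν (n - r) ε := by
  have h := integral_add_const_pow_cmpMeasure (s := -ν * Real.log ε) hν
    (relDev_mem_polyGrowth ε) 1 n
  simp only [relDev_add_one, mul_pow, integral_const_mul, one_pow, mul_one] at h
  exact h

lemma pow_mul_integral_natCast_pow_mem_expandable (hν : 0 < ν) (n : ℕ) :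
    (fun ε => ε ^ n * ∫ j, (j : ℝ) ^ n ∂cmpLaw ν ε) ∈ expandable := by
  convert expandable.sum_mem fun r (_ : r ∈ Finset.range (n + 1)) =>
    expandable.smul_mem ⟨_, hasExpansion_cmpMoment hν (n - r)⟩ (n.choose r : ℝ) using 1
  ext ε
  simp [pow_mul_integral_natCast_pow_cmpLaw hν]

lemma pow_mul_cmpCumulant_mem_expandable (hν : 0 < ν) (n : ℕ) :
    (fun ε => ε ^ (n + 1) * cmpCumulant ν (n + 1) ε) ∈ expandable := by
  induction n using Nat.strong_induction_on with
  | _ n ih =>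
    have hsum := expandable.sum_mem fun i (hi : i ∈ Finset.range n) =>
      expandable.smul_mem (expandable.mul_mem (ih i (Finset.mem_range.1 hi))
        (pow_mul_integral_natCast_pow_mem_expandable hν (n - i))) (n.choose i : ℝ)
    convert expandable.sub_mem (pow_mul_integral_natCast_pow_mem_expandable hν (n + 1)) hsum using 1
    ext ε
    have := isProbabilityMeasure_cmpLaw hν ε
    have hlast : ∫ j, (j : ℝ) ^ (n - n) ∂cmpLaw ν ε = 1 := by simp
    have hterm : ∀ i ∈ Finset.range n, ε ^ (n + 1) *
        (n.choose i * cmpCumulant ν (i + 1) ε * ∫ j, (j : ℝ) ^ (n - i) ∂cmpLaw ν ε) =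
          n.choose i * (ε ^ (i + 1) * cmpCumulant ν (i + 1) ε *
            (ε ^ (n - i) * ∫ j, (j : ℝ) ^ (n - i) ∂cmpLaw ν ε)) := by
      intro i hi
      rw [show n + 1 = i + 1 + (n - i) by have := Finset.mem_range.1 hi; omega, pow_add]
      ring
    rw [Pi.sub_apply, Finset.sum_apply, integral_natCast_pow_succ_cmpLaw hν, Finset.sum_range_succ,
      mul_add, Finset.mul_sum, Finset.sum_congr rfl hterm, hlast, Nat.choose_self]
    simp

lemma hasDerivAt_cmpCumulant (hν : 0 < ν) (n : ℕ) {ε : ℝ} (hε : 0 < ε) :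
    HasDerivAt (cmpCumulant ν n) (-ν / ε * cmpCumulant ν (n + 1) ε) ε := by
  have hs := mem_interior_integrableExpSet_cmpBase hν (-ν * Real.log ε)
  have hK := ((analyticAt_cgf hs).iterated_deriv n).differentiableAt.hasDerivAt
  rw [← iteratedDeriv_eq_iterate, ← iteratedDeriv_succ] at hK
  have h := hK.comp ε ((Real.hasDerivAt_log hε.ne').const_mul (-ν))
  rwa [mul_comm, ← div_eq_mul_inv] at h

/-- The formal asymptotic expansion of `ε * cmpCumulant ν (n + 1) ε`. Differentiating the cumulants
in the parameter `-ν * log ε` acts diagonally on expansions in powers of `ε`. -/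
noncomputable def cmpCumulantSeries (ν : ℝ) (n : ℕ) : ℝ⟦X⟧ :=
  .mk fun s => ((1 - s) / ν) ^ n * PowerSeries.coeff s (1 + cmpMomentSeries ν 1)

lemma cmpCumulantSeries_succ (ν : ℝ) (n : ℕ) : cmpCumulantSeries ν (n + 1) =
    ν⁻¹ • (cmpCumulantSeries ν n -
      PowerSeries.X * PowerSeries.derivative ℝ (cmpCumulantSeries ν n)) := by
  ext s
  have hX (F : ℝ⟦X⟧) : (PowerSeries.X * PowerSeries.derivative ℝ F).coeff s = s * F.coeff s := by
    cases s <;> simp [PowerSeries.coeff_succ_X_mul, PowerSeries.coeff_derivative, mul_comm]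
  rw [PowerSeries.coeff_smul, map_sub, hX, cmpCumulantSeries, cmpCumulantSeries,
    PowerSeries.coeff_mk, PowerSeries.coeff_mk, smul_eq_mul]
  ring

theorem hasExpansion_mul_cmpCumulant (hν : 0 < ν) (n : ℕ) :
    HasExpansion (fun ε => ε * cmpCumulant ν (n + 1) ε) (cmpCumulantSeries ν n) := by
  induction n with
  | zero =>
    have hmean : (fun ε => ε * cmpCumulant ν 1 ε) = fun ε => 1 + cmpMoment ν 1 ε := by
      ext ε
      have h := pow_mul_integral_natCast_pow_cmpLaw hν 1 ε
      simpa [Finset.sum_range_succ, integral_natCast_cmpLaw hν, cmpMoment_zero hν, add_comm] using h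
    have hseries : cmpCumulantSeries ν 0 = 1 + cmpMomentSeries ν 1 := by
      ext s
      simp [cmpCumulantSeries]
    rw [zero_add, hmean, hseries]
    exact fun N => HasExpansionUpTo.one.add (hasExpansion_cmpMoment hν 1 N)
  | succ n ih =>
    have hderiv : ∀ᶠ ε in 𝓝[>] (0 : ℝ), HasDerivAt (fun ε => ε * cmpCumulant ν (n + 1) ε)
        (cmpCumulant ν (n + 1) ε - ν * cmpCumulant ν (n + 2) ε) ε := by
      filter_upwards [self_mem_nhdsWithin] with ε (hε : 0 < ε)
      refine ((hasDerivAt_id' ε).fun_mul (hasDerivAt_cmpCumulant hν (n + 1) hε)).congr_deriv ?_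
      field_simp
      ring
    obtain ⟨G, hG⟩ : (fun ε => ε ^ (n + 2) *
        (cmpCumulant ν (n + 1) ε - ν * cmpCumulant ν (n + 2) ε)) ∈ expandable := by
      convert expandable.sub_mem (expandable.mul_mem ⟨_, fun N => HasExpansionUpTo.id⟩
        (pow_mul_cmpCumulant_mem_expandable hν n))
        (expandable.smul_mem (pow_mul_cmpCumulant_mem_expandable hν (n + 1)) ν) using 1
      ext ε
      simp only [Pi.sub_apply, Pi.mul_apply, Pi.smul_apply, smul_eq_mul]
      ring
    have hrec : (fun ε => ε * cmpCumulant ν (n + 2) ε) = fun ε => ν⁻¹ *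
        (ε * cmpCumulant ν (n + 1) ε -
          ε * (cmpCumulant ν (n + 1) ε - ν * cmpCumulant ν (n + 2) ε)) := by
      ext ε
      field_simp
      ring
    rw [hrec, cmpCumulantSeries_succ]
    exact fun N => ((ih N).sub (HasExpansionUpTo.id.mul (ih.derivative hderiv hG N))).const_mul _

end Cumulants

section Coefficients

lemma choose_eq_prod_div_factorial (ν : ℝ) (n : ℕ) :
    Ring.choose ν n = (∏ i ∈ Finset.range n, (ν - i)) / n.factorial := by
  rw [Ring.choose_eq_smul, ← descPochhammer_eval_eq_prod_range,
    ← descPochhammer_map (algebraMap ℤ ℝ), Polynomial.eval_map_algebraMap,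
    Polynomial.aeval_eq_smeval, smul_eq_mul, inv_mul_eq_div]

lemma cmpMomentCoeff_zero_right (ν : ℝ) (s : ℕ) :
    cmpMomentCoeff ν s 0 = if s = 0 then 1 else 0 := by
  rw [cmpMomentCoeff]

lemma cmpMomentCoeff_succ (ν : ℝ) (s k : ℕ) : cmpMomentCoeff ν s (k + 1) =
    (∑ r ∈ Finset.range (min k s),
        k.choose (r + 1) * cmpMomentCoeff ν (s - (r + 1)) (k - (r + 1)) -
      ∑ i ∈ Finset.range (2 * s - 1 - k),
        Ring.choose ν (i + 2) * cmpMomentCoeff ν s (k + 2 + i)) / ν := by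
  rw [cmpMomentCoeff, ← Fin.sum_univ_eq_sum_range, ← Fin.sum_univ_eq_sum_range]

lemma choose_two (ν : ℝ) : Ring.choose ν 2 = ν * (ν - 1) / 2 := by
  norm_num [choose_eq_prod_div_factorial, Finset.prod_range_succ, Nat.factorial]

lemma choose_three (ν : ℝ) : Ring.choose ν 3 = ν * (ν - 1) * (ν - 2) / 6 := by
  norm_num [choose_eq_prod_div_factorial, Finset.prod_range_succ, Nat.factorial]

lemma choose_four (ν : ℝ) : Ring.choose ν 4 = ν * (ν - 1) * (ν - 2) * (ν - 3) / 24 := by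
  norm_num [choose_eq_prod_div_factorial, Finset.prod_range_succ, Nat.factorial]

lemma choose_five (ν : ℝ) : Ring.choose ν 5 = ν * (ν - 1) * (ν - 2) * (ν - 3) * (ν - 4) / 120 := by
  norm_num [choose_eq_prod_div_factorial, Finset.prod_range_succ, Nat.factorial]

lemma choose_six (ν : ℝ) :
    Ring.choose ν 6 = ν * (ν - 1) * (ν - 2) * (ν - 3) * (ν - 4) * (ν - 5) / 720 := by
  norm_num [choose_eq_prod_div_factorial, Finset.prod_range_succ, Nat.factorial]

variable {ν : ℝ}

lemma cmpMomentCoeff_one_two : cmpMomentCoeff ν 1 2 = 1 / ν := by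
  simp [cmpMomentCoeff_succ, cmpMomentCoeff_zero_right]

lemma cmpMomentCoeff_one_one (hν : ν ≠ 0) : cmpMomentCoeff ν 1 1 = -(ν - 1) / (2 * ν) := by
  have hrec : cmpMomentCoeff ν 1 1 = -(Ring.choose ν 2 * cmpMomentCoeff ν 1 2) / ν := by
    rw [cmpMomentCoeff_succ]
    simp
  rw [hrec, cmpMomentCoeff_one_two, choose_two]
  field_simp

lemma cmpMomentCoeff_two_four (hν : ν ≠ 0) : cmpMomentCoeff ν 2 4 = 3 / ν ^ 2 := by
  have hrec : cmpMomentCoeff ν 2 4 = 3 * cmpMomentCoeff ν 1 2 / ν := by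
    rw [cmpMomentCoeff_succ]
    norm_num [Finset.sum_range_succ, cmpMomentCoeff_eq_zero, Nat.choose]
  rw [hrec, cmpMomentCoeff_one_two]
  field_simp

lemma cmpMomentCoeff_two_three (hν : ν ≠ 0) : cmpMomentCoeff ν 2 3 = (5 - 3 * ν) / (2 * ν ^ 2) := by
  have hrec : cmpMomentCoeff ν 2 3 =
      (2 * cmpMomentCoeff ν 1 1 + 1 - Ring.choose ν 2 * cmpMomentCoeff ν 2 4) / ν := by
    rw [cmpMomentCoeff_succ]
    norm_num [Finset.sum_range_succ, cmpMomentCoeff_zero_right, Nat.choose]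
  rw [hrec, cmpMomentCoeff_one_one hν, cmpMomentCoeff_two_four hν, choose_two]
  field_simp
  ring

lemma cmpMomentCoeff_two_two (hν : ν ≠ 0) : cmpMomentCoeff ν 2 2 = (ν - 1) ^ 2 / (4 * ν ^ 2) := by
  have hrec : cmpMomentCoeff ν 2 2 =
      -(Ring.choose ν 2 * cmpMomentCoeff ν 2 3 + Ring.choose ν 3 * cmpMomentCoeff ν 2 4) / ν := by
    rw [cmpMomentCoeff_succ]
    simp [Finset.sum_range_succ, cmpMomentCoeff_zero_right]
  rw [hrec, cmpMomentCoeff_two_three hν, cmpMomentCoeff_two_four hν, choose_two, choose_three]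
  field_simp
  ring

lemma cmpMomentCoeff_two_one (hν : ν ≠ 0) : cmpMomentCoeff ν 2 1 = -(ν ^ 2 - 1) / (24 * ν ^ 2) := by
  have hrec : cmpMomentCoeff ν 2 1 =
      -(Ring.choose ν 2 * cmpMomentCoeff ν 2 2 + Ring.choose ν 3 * cmpMomentCoeff ν 2 3 +
        Ring.choose ν 4 * cmpMomentCoeff ν 2 4) / ν := by
    rw [cmpMomentCoeff_succ]
    simp [Finset.sum_range_succ]
  rw [hrec, cmpMomentCoeff_two_two hν, cmpMomentCoeff_two_three hν, cmpMomentCoeff_two_four hν,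
    choose_two, choose_three, choose_four]
  field_simp
  ring

lemma cmpMomentCoeff_three_six (hν : ν ≠ 0) : cmpMomentCoeff ν 3 6 = 15 / ν ^ 3 := by
  have hrec : cmpMomentCoeff ν 3 6 = 5 * cmpMomentCoeff ν 2 4 / ν := by
    rw [cmpMomentCoeff_succ]
    norm_num [Finset.sum_range_succ, cmpMomentCoeff_eq_zero, Nat.choose]
  rw [hrec, cmpMomentCoeff_two_four hν]
  field_simp
  norm_num

lemma cmpMomentCoeff_three_five (hν : ν ≠ 0) :
    cmpMomentCoeff ν 3 5 = (35 - 15 * ν) / (2 * ν ^ 3) := by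
  have hrec : cmpMomentCoeff ν 3 5 =
      (4 * cmpMomentCoeff ν 2 3 +
        6 * cmpMomentCoeff ν 1 2 - Ring.choose ν 2 * cmpMomentCoeff ν 3 6) / ν := by
    rw [cmpMomentCoeff_succ]
    norm_num [Finset.sum_range_succ, cmpMomentCoeff_eq_zero, Nat.choose]
  rw [hrec, cmpMomentCoeff_two_three hν, cmpMomentCoeff_one_two, cmpMomentCoeff_three_six hν,
    choose_two]
  field_simp
  ring

lemma cmpMomentCoeff_three_four (hν : ν ≠ 0) :
    cmpMomentCoeff ν 3 4 = (3 * ν ^ 2 - 10 * ν + 9) / (2 * ν ^ 3) := by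
  have hrec : cmpMomentCoeff ν 3 4 =
      (3 * cmpMomentCoeff ν 2 2 + 3 * cmpMomentCoeff ν 1 1 +
        1 - (Ring.choose ν 2 * cmpMomentCoeff ν 3 5 +
        Ring.choose ν 3 * cmpMomentCoeff ν 3 6)) / ν := by
    rw [cmpMomentCoeff_succ]
    norm_num [Finset.sum_range_succ, cmpMomentCoeff_zero_right, Nat.choose]
  rw [hrec, cmpMomentCoeff_two_two hν, cmpMomentCoeff_one_one hν, cmpMomentCoeff_three_five hν,
    cmpMomentCoeff_three_six hν, choose_two, choose_three]
  field_simp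
  ring

lemma cmpMomentCoeff_three_three (hν : ν ≠ 0) :
    cmpMomentCoeff ν 3 3 = (2 - 3 * ν + 2 * ν ^ 2 - ν ^ 3) / (8 * ν ^ 3) := by
  have hrec : cmpMomentCoeff ν 3 3 =
      (2 * cmpMomentCoeff ν 2 1 - (Ring.choose ν 2 * cmpMomentCoeff ν 3 4 +
        Ring.choose ν 3 * cmpMomentCoeff ν 3 5 + Ring.choose ν 4 * cmpMomentCoeff ν 3 6)) / ν := by
    rw [cmpMomentCoeff_succ]
    norm_num [Finset.sum_range_succ, cmpMomentCoeff_zero_right, Nat.choose]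
  rw [hrec, cmpMomentCoeff_two_one hν, cmpMomentCoeff_three_four hν, cmpMomentCoeff_three_five hν,
    cmpMomentCoeff_three_six hν, choose_two, choose_three, choose_four]
  field_simp
  ring

lemma cmpMomentCoeff_three_two (hν : ν ≠ 0) :
    cmpMomentCoeff ν 3 2 = (ν ^ 2 - 1) / (24 * ν ^ 2) := by
  have hrec : cmpMomentCoeff ν 3 2 =
      -(Ring.choose ν 2 * cmpMomentCoeff ν 3 3 + Ring.choose ν 3 * cmpMomentCoeff ν 3 4 +
        Ring.choose ν 4 * cmpMomentCoeff ν 3 5 + Ring.choose ν 5 * cmpMomentCoeff ν 3 6) / ν := by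
    rw [cmpMomentCoeff_succ]
    simp [Finset.sum_range_succ, cmpMomentCoeff_zero_right]
  rw [hrec, cmpMomentCoeff_three_three hν, cmpMomentCoeff_three_four hν,
    cmpMomentCoeff_three_five hν, cmpMomentCoeff_three_six hν, choose_two, choose_three,
    choose_four, choose_five]
  field_simp
  ring

lemma cmpMomentCoeff_three_one (hν : ν ≠ 0) :
    cmpMomentCoeff ν 3 1 = -(ν ^ 2 - 1) / (24 * ν ^ 3) := by
  have hrec : cmpMomentCoeff ν 3 1 =
      -(Ring.choose ν 2 * cmpMomentCoeff ν 3 2 + Ring.choose ν 3 * cmpMomentCoeff ν 3 3 +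
        Ring.choose ν 4 * cmpMomentCoeff ν 3 4 + Ring.choose ν 5 * cmpMomentCoeff ν 3 5 +
        Ring.choose ν 6 * cmpMomentCoeff ν 3 6) / ν := by
    rw [cmpMomentCoeff_succ]
    simp [Finset.sum_range_succ]
  rw [hrec, cmpMomentCoeff_three_two hν, cmpMomentCoeff_three_three hν,
    cmpMomentCoeff_three_four hν, cmpMomentCoeff_three_five hν, cmpMomentCoeff_three_six hν,
    choose_two, choose_three, choose_four, choose_five, choose_six]
  field_simp
  ring

end Coefficients

section Kurtosis

variable {ν : ℝ}

lemma constantCoeff_cmpCumulantSeries (ν : ℝ) (n : ℕ) :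
    PowerSeries.constantCoeff (cmpCumulantSeries ν n) = ν⁻¹ ^ n := by
  simp [← PowerSeries.coeff_zero_eq_constantCoeff_apply, cmpCumulantSeries, cmpMomentSeries,
    cmpMomentCoeff_eq_zero]

lemma coeff_succ_cmpCumulantSeries (ν : ℝ) (n s : ℕ) :
    (cmpCumulantSeries ν n).coeff (s + 1) = (-s / ν) ^ n * cmpMomentCoeff ν (s + 1) 1 := by
  simp [cmpCumulantSeries, cmpMomentSeries, PowerSeries.coeff_one]

lemma coeff_one_cmpCumulantSeries (ν : ℝ) {n : ℕ} (hn : n ≠ 0) :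
    (cmpCumulantSeries ν n).coeff 1 = 0 := by
  simp [coeff_succ_cmpCumulantSeries ν n 0, hn]

lemma coeff_two_cmpCumulantSeries (hν : ν ≠ 0) (n : ℕ) :
    (cmpCumulantSeries ν n).coeff 2 = (-1 / ν) ^ n * (-(ν ^ 2 - 1) / (24 * ν ^ 2)) := by
  simpa [cmpMomentCoeff_two_one hν] using coeff_succ_cmpCumulantSeries ν n 1

lemma coeff_three_cmpCumulantSeries (hν : ν ≠ 0) (n : ℕ) :
    (cmpCumulantSeries ν n).coeff 3 = (-2 / ν) ^ n * (-(ν ^ 2 - 1) / (24 * ν ^ 3)) := by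
  simpa [cmpMomentCoeff_three_one hν] using coeff_succ_cmpCumulantSeries ν n 2

lemma eventually_cmpCumulant_two_ne_zero (hν : 0 < ν) :
    ∀ᶠ ε in 𝓝[>] (0 : ℝ), cmpCumulant ν 2 ε ≠ 0 := by
  have h := (hasExpansion_mul_cmpCumulant hν 1).tendsto
  rw [constantCoeff_cmpCumulantSeries, pow_one] at h
  filter_upwards [h.eventually_ne (inv_ne_zero hν.ne')] with ε hε
  exact right_ne_zero_of_mul hε

theorem hasExpansion_inv_mul_cmpExcessKurtosis (hν : 0 < ν) :
    HasExpansion (fun ε => ε⁻¹ * cmpExcessKurtosis (Real.exp (-ν * Real.log ε)) ν)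
      (cmpCumulantSeries ν 3 * (cmpCumulantSeries ν 1 * cmpCumulantSeries ν 1)⁻¹) := by
  have h0 : PowerSeries.constantCoeff (cmpCumulantSeries ν 1 * cmpCumulantSeries ν 1) ≠ 0 := by
    simp [constantCoeff_cmpCumulantSeries, hν.ne']
  have hsq : HasExpansion _ (cmpCumulantSeries ν 1 * cmpCumulantSeries ν 1) := fun N =>
    (hasExpansion_mul_cmpCumulant hν 1 N).mul (hasExpansion_mul_cmpCumulant hν 1 N)
  refine fun N => ((hasExpansion_mul_cmpCumulant hν 3).div hsq h0 N).congr' ?_ EventuallyEq.rfl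
  filter_upwards [self_mem_nhdsWithin, eventually_cmpCumulant_two_ne_zero hν] with ε (hε : 0 < ε) hκ
  rw [cmpExcessKurtosis_exp hν hκ]
  field_simp

lemma X_pow_four_dvd_smul_mul_inv_sub (hν : ν ≠ 0) : PowerSeries.X ^ 4 ∣
    ν • (cmpCumulantSeries ν 3 * (cmpCumulantSeries ν 1 * cmpCumulantSeries ν 1)⁻¹) -
      ((1 - Polynomial.C ((ν ^ 2 - 1) / (24 * ν ^ 2)) * Polynomial.X ^ 2 +
        Polynomial.C ((ν ^ 2 - 1) / (6 * ν ^ 3)) * Polynomial.X ^ 3 : ℝ[X]) : ℝ⟦X⟧) := by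
  have h0 : PowerSeries.constantCoeff (cmpCumulantSeries ν 1 * cmpCumulantSeries ν 1) ≠ 0 := by
    simp [constantCoeff_cmpCumulantSeries, hν]
  set P : ℝ[X] := 1 - Polynomial.C ((ν ^ 2 - 1) / (24 * ν ^ 2)) * Polynomial.X ^ 2 +
    Polynomial.C ((ν ^ 2 - 1) / (6 * ν ^ 3)) * Polynomial.X ^ 3 with hP
  have hP0 : P.coeff 0 = 1 := by simp [hP]
  have hP1 : P.coeff 1 = 0 := by simp [hP, Polynomial.coeff_one, Polynomial.coeff_X_pow]
  have hP2 : P.coeff 2 = -((ν ^ 2 - 1) / (24 * ν ^ 2)) := by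
    simp [hP, Polynomial.coeff_one, Polynomial.coeff_X_pow]
  have hP3 : P.coeff 3 = (ν ^ 2 - 1) / (6 * ν ^ 3) := by
    simp [hP, Polynomial.coeff_one, Polynomial.coeff_X_pow]
  rw [← smul_mul_assoc]
  refine X_pow_dvd_mul_inv_sub h0 (PowerSeries.X_pow_dvd_iff.2 fun s hs => ?_)
  rw [map_sub, map_smul, smul_eq_mul]
  interval_cases s <;>
  simp only [PowerSeries.coeff_zero_eq_constantCoeff_apply, map_mul, PowerSeries.coeff_one_mul,
    coeff_two_mul, coeff_three_mul, Polynomial.coeff_coe, Polynomial.constantCoeff_coe,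
    constantCoeff_cmpCumulantSeries,
    coeff_one_cmpCumulantSeries ν one_ne_zero, coeff_one_cmpCumulantSeries ν three_ne_zero,
    coeff_two_cmpCumulantSeries hν, coeff_three_cmpCumulantSeries hν, hP0, hP1, hP2, hP3] <;>
  field_simp <;>
  ring

theorem isBigO_cmpExcessKurtosis_exp_sub (hν : 0 < ν) :
    (fun ε => ν * ε⁻¹ * cmpExcessKurtosis (Real.exp (-ν * Real.log ε)) ν - 1 +
      (ν ^ 2 - 1) / (24 * ν ^ 2) * ε ^ 2 - (ν ^ 2 - 1) / (6 * ν ^ 3) * ε ^ 3) =O[𝓝[>] 0]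
        fun ε => ε ^ 4 := by
  have h := (hasExpansionUpTo_iff (X_pow_four_dvd_smul_mul_inv_sub hν.ne')).1
    ((hasExpansion_inv_mul_cmpExcessKurtosis hν 4).const_mul ν)
  refine h.congr_left fun ε => ?_
  simp only [Polynomial.eval_add, Polynomial.eval_sub, Polynomial.eval_mul, Polynomial.eval_pow,
    Polynomial.eval_one, Polynomial.eval_C, Polynomial.eval_X]
  ring

end Kurtosis

/-- Asymptotics of the excess kurtosis of the `CMP(λ,ν)` distribution:
`γ₂ = (λ^{−1/ν}/ν)(1 − ((ν²−1)/(24ν²)) λ^{−2/ν} + ((ν²−1)/(6ν³)) λ^{−3/ν}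
  + O(λ^{−4/ν}))` as `λ → ∞`. -/
theorem cmpExcessKurtosis_asymptotic (ν : ℝ) (hν : 0 < ν) :
    ∃ C > (0 : ℝ), ∃ Λ > (0 : ℝ), ∀ lam : ℝ, lam ≥ Λ →
      |ν * lam ^ (1 / ν) * cmpExcessKurtosis lam ν - 1 +
          ((ν ^ 2 - 1) / (24 * ν ^ 2)) * lam ^ (-(2 / ν)) -
          ((ν ^ 2 - 1) / (6 * ν ^ 3)) * lam ^ (-(3 / ν))|
        ≤ C * lam ^ (-(4 / ν)) := by
  have hlim : Tendsto (fun lam : ℝ => lam ^ (-(1 / ν))) atTop (𝓝[>] 0) := by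
    refine tendsto_nhdsWithin_iff.2 ⟨tendsto_rpow_neg_atTop (by positivity), ?_⟩
    filter_upwards [eventually_gt_atTop 0] with lam hlam using Real.rpow_pos_of_pos hlam _
  obtain ⟨C, hC, hbound⟩ := (isBigO_cmpExcessKurtosis_exp_sub hν).exists_pos
  obtain ⟨Λ, hΛ⟩ := eventually_atTop.1 (hlim.eventually hbound.bound)
  refine ⟨C, hC, max Λ 1, by positivity, fun lam hlam => ?_⟩
  have hpos : 0 < lam := one_pos.trans_le ((le_max_right _ _).trans hlam)
  have hexp : Real.exp (-ν * Real.log (lam ^ (-(1 / ν)))) = lam := by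
    rw [Real.log_rpow hpos, ← mul_assoc, neg_mul_neg, mul_one_div_cancel hν.ne', one_mul,
      Real.exp_log hpos]
  have hinv : (lam ^ (-(1 / ν)))⁻¹ = lam ^ (1 / ν) := by rw [← Real.rpow_neg hpos.le, neg_neg]
  have hpow (n : ℕ) : (lam ^ (-(1 / ν))) ^ n = lam ^ (-(n / ν)) := by
    rw [← Real.rpow_mul_natCast hpos.le, neg_mul, one_div_mul_eq_div]
  have h := hΛ lam ((le_max_left _ _).trans hlam)
  rw [hexp, hinv, hpow, hpow, hpow, Real.norm_eq_abs, Real.norm_of_nonneg (by positivity)] at h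
  exact_mod_cast h
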